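/- Let (E_n)_{n≥1} be a sequence of finite dimensional Banach spaces with dim E_n = n. The following are equivalent: (1) sup_{n≥1} K_G(E_n, ℓ_2) < ∞; (2) there exist constants K_1, K_2 > 0 such that for every n, every Hilbert space H and every linear map B : E_n* → H one has π_1(B) ≤ K_1‖B‖, and every linear map A : E_n → E_n* satisfies γ_2(A) ≤ K_2‖A‖; (3) there exist constants K_1, K_2 > 0 such that for every n, every Hilbert space H and every linear map B : E_n* → H one has π_2(B) ≤ K_1‖B‖, and every linear map A : E_n → E_n* satisfies γ_2(A) ≤ K_2‖A‖. Moreover (1) implies that there is K > 0 with γ_2*(A) ≤ K‖A‖ for every n and every A : E_n → E_n*, where γ_2*(A) = inf{π_2(φ)·π_2(ψ*) : A = ψ∘φ with φ : E_n → ℓ_2, ψ : ℓ_2 → E_n*}. -/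

import Mathlib

/-!
All four conditions concern the spaces `E n` one at a time, so the equivalences reduce to implications
with explicit constants for a single finite dimensional space `X`. Condition (1) for `X` is `GTBound`.

**From (1) to factorizations.** Pairing the tensor `u ∘ A` with an operator `X* → ℓ₂` turns (1) into
the Grothendieck inequality `∑ A (x j) (y j) ≤ C ‖A‖ w(x) w(y)` with weak `ℓ₂` norms
(`GTBound.sum_le`). Since it holds for all finite sequences, a minimax argument over the compact
convex hull of the squares `ξ ⊗ ξ`, `‖ξ‖ ≤ 1`, gives a Pietsch type domination
`2 A x y ≤ C ‖A‖ (∑ (a i x)² + ∑ (b i y)²)` with `∑ ‖a i‖² ≤ 1` and `∑ ‖b i‖² ≤ 1`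
(`GTBound.exists_domination`). Consequently `A` factors through `ℓ₂` as `ψ φ` with `φ` and the
transpose of `ψ` both `2`-summing (`GTBound.exists_factorization`). This is (4) and also the bound on
`γ₂` in (2).

**From (1) to the bound on `π₁`.** It suffices to treat the operators `ξ ↦ ξ ∘ T`, with `T` a
contraction from a Euclidean space to `X`; let `e = E ‖T x‖` for a standard Gaussian vector `x`. If
`e ≤ 1`, the bound is the average of the hypothesis `∑ |ξ i (T x)| ≤ w ‖T x‖`. If `e ≥ 1`, take two
independent Gaussian matrices `g`, `g'` with `k ≈ e²` columns. The Grothendieck inequality for the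
columns of `T ∘ g` and `T ∘ g'` and the operator `A = ∑ ξ i ⊗ z i`, with `z i` norming functionals,
gives `∑ ‖T (g' (s i))‖ ≤ C w ‖T ∘ g‖ ‖T ∘ g'‖`, where `s i` is the vector of the values of `ξ i` at
the columns of `T ∘ g`. On average the left side is at least `√k a e ∑ ‖ξ i ∘ T‖`, with `a` the first
absolute Gaussian moment, and the right side is at most a multiple of `C w e²`, by Chevet's inequality
(`integral_norm_comp_matOp_le`); see `GTBound.sum_norm_comp_le`. Chevet's inequality in turn follows
from a sub-Gaussian bound for `‖T x‖` (`integral_exp_norm_le`), which is derived from the rotation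
invariance of the Gaussian measure, by expressing `exp (‖T ∘ g‖² / 32)` through the exponential
moments of one more Gaussian vector.

**From (2) to (3)**, a `1`-summing operator is `2`-summing with the same constant
(`psum_two_of_one`).

**From (3) to (1)**, the projective norm of `u ∘ Aᵀ` is attained in trace duality against some
`G : X* → ℓ₂`. Factoring `Aᵀ` through a Hilbert space and expanding in an orthonormal basis bounds the
trace by the product of the `2`-summing norms of `G` and `u` (`gtBound_of_summing`).
-/

open scoped BigOperators

/-- The projective tensor norm of the element of `X* ⊗ F` corresponding (via the canonical
identification, `X` finite dimensional) to the continuous linear map `u : X → F`. -/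
noncomputable def projNorm {X F : Type*} [NormedAddCommGroup X] [NormedSpace ℝ X]
    [NormedAddCommGroup F] [NormedSpace ℝ F] (u : X →L[ℝ] F) : ℝ :=
  sInf { r : ℝ | ∃ (k : ℕ) (η : Fin k → (X →L[ℝ] ℝ)) (f : Fin k → F),
    (∀ x, u x = ∑ i, η i x • f i) ∧ r = ∑ i, ‖η i‖ * ‖f i‖ }

/-- The Grothendieck constant `K_G(E,F)`.  An element of `E ⊗ F` is encoded as a map
`u : E* → F`, an element of `E* ⊗ F` as a map `E → F`, and `A ⊗ id_F` sends `u` to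
`u ∘ Aᵀ`, where `Aᵀ = A.flip : E → E*`. -/
noncomputable def KG (E F : Type*) [NormedAddCommGroup E] [NormedSpace ℝ E]
    [NormedAddCommGroup F] [NormedSpace ℝ F] : ℝ :=
  sSup { r : ℝ | ∃ (A : E →L[ℝ] (E →L[ℝ] ℝ)) (u : (E →L[ℝ] ℝ) →L[ℝ] F),
    ‖A‖ ≤ 1 ∧ ‖u‖ ≤ 1 ∧ r = projNorm (u.comp A.flip) }

/-- `ρ(E,F)`: the norm of the identity from `E ⊗̌ F` to `E ⊗̂ F`. -/
noncomputable def rho (E F : Type*) [NormedAddCommGroup E] [NormedSpace ℝ E]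
    [NormedAddCommGroup F] [NormedSpace ℝ F] : ℝ :=
  sSup { r : ℝ | ∃ u : (E →L[ℝ] ℝ) →L[ℝ] F, ‖u‖ ≤ 1 ∧ r = projNorm u }

/-- `A : E → E*` is non-negative: the corresponding tensor in `E* ⊗ E*` is a (finite) sum of
symmetric tensors `η ⊗ η`, i.e. lies in the convex hull of such tensors. -/
def IsNonnegMap {E : Type*} [NormedAddCommGroup E] [NormedSpace ℝ E]
    (A : E →L[ℝ] (E →L[ℝ] ℝ)) : Prop :=
  ∃ (k : ℕ) (η : Fin k → (E →L[ℝ] ℝ)), ∀ x, A x = ∑ i, η i x • η i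

/-- A tensor `z ∈ E ⊗ E` (encoded as a map `E* → E`) is non-negative if it is a finite sum of
symmetric tensors `e ⊗ e`. -/
def IsNonnegTensor {E : Type*} [NormedAddCommGroup E] [NormedSpace ℝ E]
    (z : (E →L[ℝ] ℝ) →L[ℝ] E) : Prop :=
  ∃ (k : ℕ) (e : Fin k → E), ∀ φ, z φ = ∑ i, φ (e i) • e i

/-- The positive Grothendieck constant `K_G⁺(E,F)`. -/
noncomputable def KGpos (E F : Type*) [NormedAddCommGroup E] [NormedSpace ℝ E]
    [NormedAddCommGroup F] [NormedSpace ℝ F] : ℝ :=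
  sSup { r : ℝ | ∃ (A : E →L[ℝ] (E →L[ℝ] ℝ)) (u : (E →L[ℝ] ℝ) →L[ℝ] F),
    IsNonnegMap A ∧ ‖A‖ ≤ 1 ∧ ‖u‖ ≤ 1 ∧ r = projNorm (u.comp A.flip) }

/-- The factorization constant `f(X,E)` of `X` through `E`. -/
noncomputable def factConst (X E : Type*) [NormedAddCommGroup X] [NormedSpace ℝ X]
    [NormedAddCommGroup E] [NormedSpace ℝ E] : ℝ :=
  sInf { r : ℝ | ∃ (u : X →L[ℝ] E) (v : E →L[ℝ] X),
    v.comp u = ContinuousLinearMap.id ℝ X ∧ r = ‖u‖ * ‖v‖ }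

/-- `γ(E) = sup { tr(BA) : A ≥ 0, B ≥ 0, ‖A‖ ≤ 1, ‖B‖ ≤ 1 }`. -/
noncomputable def gammaConst (E : Type*) [NormedAddCommGroup E] [NormedSpace ℝ E] : ℝ :=
  sSup { r : ℝ | ∃ (A : E →L[ℝ] (E →L[ℝ] ℝ)) (B : (E →L[ℝ] ℝ) →L[ℝ] E),
    IsNonnegMap A ∧ IsNonnegTensor B ∧ ‖A‖ ≤ 1 ∧ ‖B‖ ≤ 1 ∧
    r = LinearMap.trace ℝ E ((B.comp A : E →L[ℝ] E) : E →ₗ[ℝ] E) }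

/-- `ρ⁺(E)`: as `ρ(E,E)` but the supremum is restricted to non-negative tensors. -/
noncomputable def rhoPlus (E : Type*) [NormedAddCommGroup E] [NormedSpace ℝ E] : ℝ :=
  sSup { r : ℝ | ∃ z : (E →L[ℝ] ℝ) →L[ℝ] E,
    IsNonnegTensor z ∧ ‖z‖ ≤ 1 ∧ r = projNorm z }

/-- `X` has (Rademacher) cotype `q`. -/
def HasCotype (X : Type*) [NormedAddCommGroup X] [NormedSpace ℝ X] (q : ℝ) : Prop :=
  ∃ C > 0, ∀ (n : ℕ) (x : Fin n → X),
    (∑ i, ‖x i‖ ^ q) ^ (1/q) ≤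
      C * (((2 : ℝ) ^ n)⁻¹ *
        ∑ ε : Fin n → Bool, ‖∑ i, (if ε i then (1:ℝ) else -1) • x i‖ ^ 2) ^ (1/2 : ℝ)

open scoped ENNReal

/-- The separable real Hilbert space `ℓ₂`. -/
noncomputable abbrev ellTwo : Type := lp (fun _ : ℕ => ℝ) 2

/-- The weak `ℓ_p` norm `sup { (∑ |x*(x_i)|^p)^{1/p} : ‖x*‖ ≤ 1 }` of a finite sequence. -/
noncomputable def weakNorm (p : ℝ) {X : Type*} [NormedAddCommGroup X] [NormedSpace ℝ X]
    {m : ℕ} (x : Fin m → X) : ℝ :=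
  sSup { s : ℝ | ∃ φ : X →L[ℝ] ℝ, ‖φ‖ ≤ 1 ∧ s = (∑ i, |φ (x i)| ^ p) ^ (1/p) }

/-- `u` is `p`-summing with constant (at most) `C`, i.e. `π_p(u) ≤ C`. -/
def PSummingBound (p C : ℝ) {X Y : Type*} [NormedAddCommGroup X] [NormedSpace ℝ X]
    [NormedAddCommGroup Y] [NormedSpace ℝ Y] (u : X →L[ℝ] Y) : Prop :=
  ∀ (m : ℕ) (x : Fin m → X), (∑ i, ‖u (x i)‖ ^ p) ^ (1/p) ≤ C * weakNorm p x

/-- `γ₂(u) ≤ C`: for every `ε > 0`, `u` factors through a (real) Hilbert space `ℓ₂(ι)` with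
`‖α‖·‖β‖ ≤ C + ε`. -/
def Gamma2Bound (C : ℝ) {X Y : Type*} [NormedAddCommGroup X] [NormedSpace ℝ X]
    [NormedAddCommGroup Y] [NormedSpace ℝ Y] (u : X →L[ℝ] Y) : Prop :=
  ∀ ε > 0, ∃ (ι : Type) (β : X →L[ℝ] lp (fun _ : ι => ℝ) 2)
    (α : lp (fun _ : ι => ℝ) 2 →L[ℝ] Y), u = α.comp β ∧ ‖α‖ * ‖β‖ ≤ C + ε

/-- The transpose (dual map) `uᵀ : Y* → X*` of `u : X → Y`. -/
noncomputable def transposeMap {X Y : Type*} [NormedAddCommGroup X] [NormedSpace ℝ X]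
    [NormedAddCommGroup Y] [NormedSpace ℝ Y] (u : X →L[ℝ] Y) :
    (Y →L[ℝ] ℝ) →L[ℝ] (X →L[ℝ] ℝ) :=
  (ContinuousLinearMap.compL ℝ X Y ℝ).flip u

section
variable (E : ℕ → Type*) [∀ n, NormedAddCommGroup (E n)] [∀ n, NormedSpace ℝ (E n)]

/-- Statement (1): `sup_n K_G(E_n, ℓ₂) < ∞`. -/
def Stmt7One : Prop :=
  ∃ C > 0, ∀ n, 1 ≤ n →
    ∀ (A : E n →L[ℝ] (E n →L[ℝ] ℝ)) (u : (E n →L[ℝ] ℝ) →L[ℝ] ellTwo),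
      projNorm (u.comp A.flip) ≤ C * ‖A‖ * ‖u‖

/-- Statement (2): uniform bounds `π₁(B) ≤ K₁‖B‖` for `B : E_n* → H` (`H` any Hilbert space)
and `γ₂(A) ≤ K₂‖A‖` for `A : E_n → E_n*`. -/
def Stmt7Two : Prop :=
  ∃ K₁ > 0, ∃ K₂ > 0, ∀ n, 1 ≤ n →
    (∀ (ι : Type) (B : (E n →L[ℝ] ℝ) →L[ℝ] lp (fun _ : ι => ℝ) 2),
      PSummingBound 1 (K₁ * ‖B‖) B) ∧
    (∀ A : E n →L[ℝ] (E n →L[ℝ] ℝ), Gamma2Bound (K₂ * ‖A‖) A)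

/-- Statement (3): as (2) but with `π₂(B) ≤ K₁‖B‖`. -/
def Stmt7Three : Prop :=
  ∃ K₁ > 0, ∃ K₂ > 0, ∀ n, 1 ≤ n →
    (∀ (ι : Type) (B : (E n →L[ℝ] ℝ) →L[ℝ] lp (fun _ : ι => ℝ) 2),
      PSummingBound 2 (K₁ * ‖B‖) B) ∧
    (∀ A : E n →L[ℝ] (E n →L[ℝ] ℝ), Gamma2Bound (K₂ * ‖A‖) A)

/-- Statement (4): `γ₂*(A) ≤ K‖A‖`, where
`γ₂*(A) = inf {π₂(φ)·π₂(ψ*) : A = ψ∘φ, φ : E_n → ℓ₂, ψ : ℓ₂ → E_n*}`. -/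
def Stmt7Four : Prop :=
  ∃ K > 0, ∀ n, 1 ≤ n → ∀ A : E n →L[ℝ] (E n →L[ℝ] ℝ), ∀ ε > 0,
    ∃ (φ : E n →L[ℝ] ellTwo) (ψ : ellTwo →L[ℝ] (E n →L[ℝ] ℝ)) (c₁ c₂ : ℝ),
      0 ≤ c₁ ∧ 0 ≤ c₂ ∧ A = ψ.comp φ ∧
      PSummingBound 2 c₁ φ ∧ PSummingBound 2 c₂ (transposeMap ψ) ∧
      c₁ * c₂ ≤ K * ‖A‖ + ε

end

/-! ### Exponential moments of the norm of a Gaussian vector -/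

section Gaussian
open MeasureTheory ProbabilityTheory

/-- The image of a standard Gaussian measure under a linear map whose adjoint `v` multiplies all norms
by `c` is the law of `c` times a standard Gaussian vector. -/
theorem std_map_eq_smul {ι κ : Type*} [Fintype ι] [Fintype κ]
    (L : EuclideanSpace ℝ ι →L[ℝ] EuclideanSpace ℝ κ) (c : ℝ)
    (v : EuclideanSpace ℝ κ → EuclideanSpace ℝ ι)
    (hv : ∀ t x, inner ℝ (L x) t = inner ℝ x (v t)) (hn : ∀ t, ‖v t‖ ^ 2 = c ^ 2 * ‖t‖ ^ 2) :
    (stdGaussian (EuclideanSpace ℝ ι)).map L =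
      (stdGaussian (EuclideanSpace ℝ κ)).map (fun x => c • x) := by
  have : IsProbabilityMeasure ((stdGaussian (EuclideanSpace ℝ ι)).map L) :=
    Measure.isProbabilityMeasure_map (by fun_prop)
  have : IsProbabilityMeasure ((stdGaussian (EuclideanSpace ℝ κ)).map (fun x => c • x)) :=
    Measure.isProbabilityMeasure_map (by fun_prop)
  apply Measure.ext_of_charFun
  ext t
  have h1 : charFun ((stdGaussian (EuclideanSpace ℝ ι)).map L) t
      = charFun (stdGaussian (EuclideanSpace ℝ ι)) (v t) := by
    rw [charFun_apply, charFun_apply, integral_map (by fun_prop) (by fun_prop)]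
    simp_rw [hv]
  rw [h1, charFun_map_smul, charFun_stdGaussian, charFun_stdGaussian, norm_smul, Real.norm_eq_abs]
  congr 3
  rw_mod_cast [mul_pow, sq_abs]
  exact_mod_cast hn t

theorem std_map_dual {ι : Type*} [Fintype ι] (L : EuclideanSpace ℝ ι →L[ℝ] ℝ) :
    (stdGaussian (EuclideanSpace ℝ ι)).map L = gaussianReal 0 (‖L‖ ^ 2).toNNReal := by
  rw [IsGaussian.map_eq_gaussianReal, integral_strongDual_stdGaussian, variance_dual_stdGaussian]

theorem lintegral_exp_dual {ι : Type*} [Fintype ι] (L : EuclideanSpace ℝ ι →L[ℝ] ℝ) :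
    ∫⁻ x, ENNReal.ofReal (Real.exp (L x)) ∂(stdGaussian (EuclideanSpace ℝ ι))
      = ENNReal.ofReal (Real.exp (‖L‖ ^ 2 / 2)) := by
  have h0 : ∫⁻ x, ENNReal.ofReal (Real.exp (L x)) ∂(stdGaussian (EuclideanSpace ℝ ι))
     = ∫⁻ y, ENNReal.ofReal (Real.exp y) ∂(gaussianReal 0 (‖L‖ ^ 2).toNNReal) := by
    rw [← std_map_dual, lintegral_map (by fun_prop) (by fun_prop)]
  rw [h0, ← ofReal_integral_eq_lintegral_ofReal]
  · congr 1
    have := congrFun (mgf_id_gaussianReal (μ := 0) (v := (‖L‖ ^ 2).toNNReal)) 1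
    simp only [mgf, id, one_mul] at this
    rw [this]
    simp
  · have := integrable_exp_mul_gaussianReal (μ := 0) (v := (‖L‖ ^ 2).toNNReal) 1
    simpa using this
  · exact ae_of_all _ fun x => (Real.exp_pos _).le

/-- The first absolute moment `E|x|` of the standard Gaussian law on the line. -/
noncomputable def gaussAbs : ℝ := ∫ x, |x| ∂(gaussianReal 0 1)

theorem gaussAbs_pos : 0 < gaussAbs := by
  unfold gaussAbs
  rw [integral_pos_iff_support_of_nonneg (fun x => abs_nonneg x)]
  · have : Function.support (fun x : ℝ => |x|) = {0}ᶜ := by ext x; simp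
    rw [this, prob_compl_eq_one_sub (measurableSet_singleton 0)]
    have : NullSingletonClass (gaussianReal 0 1) := nullSingletonClass_gaussianReal (by norm_num)
    rw [measure_singleton]
    simp
  · have := (IsGaussian.integrable_id (μ := gaussianReal 0 1))
    exact this.abs

theorem integral_abs_dual {ι : Type*} [Fintype ι] (L : EuclideanSpace ℝ ι →L[ℝ] ℝ) :
    ∫ x, |L x| ∂(stdGaussian (EuclideanSpace ℝ ι)) = gaussAbs * ‖L‖ := by
  have h0 : ∫ x, |L x| ∂(stdGaussian (EuclideanSpace ℝ ι))
     = ∫ y, |y| ∂(gaussianReal 0 (‖L‖ ^ 2).toNNReal) := by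
    rw [← std_map_dual, integral_map (by fun_prop) (by fun_prop)]
  have h1 : gaussianReal 0 (‖L‖ ^ 2).toNNReal = (gaussianReal 0 1).map (‖L‖ * ·) := by
    rw [gaussianReal_map_const_mul]
    congr 1
    · simp
    · ext; simp
  rw [h0, h1, integral_map (by fun_prop) (by fun_prop)]
  simp_rw [abs_mul, abs_norm]
  rw [integral_const_mul, gaussAbs, mul_comm]

theorem integrable_exp_norm {ι : Type*} [Fintype ι] (c : ℝ) :
    Integrable (fun x => Real.exp (c * ‖x‖)) (stdGaussian (EuclideanSpace ℝ ι)) := by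
  obtain ⟨C, hC, hi⟩ := IsGaussian.exists_integrable_exp_sq (stdGaussian (EuclideanSpace ℝ ι))
  refine (hi.const_mul (Real.exp (c ^ 2 / (4 * C)))).mono' (by fun_prop) (ae_of_all _ fun x => ?_)
  rw [Real.norm_eq_abs, Real.abs_exp, ← Real.exp_add]
  apply Real.exp_le_exp.mpr
  have : c ^ 2 / (4 * C) + C * ‖x‖ ^ 2 - c * ‖x‖ = (c - 2 * C * ‖x‖) ^ 2 / (4 * C) := by
    field_simp; ring
  have h2 : 0 ≤ (c - 2 * C * ‖x‖) ^ 2 / (4 * C) := by positivity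
  linarith

/-- A countable family of functionals in the dual unit ball that is norming up to the factor `0.95`;
countability permits a measurable choice of a norming functional. -/
theorem exists_norming_seq (X : Type*) [NormedAddCommGroup X] [NormedSpace ℝ X]
    [FiniteDimensional ℝ X] :
    ∃ ξ : ℕ → (X →L[ℝ] ℝ), (∀ j, ‖ξ j‖ ≤ 1) ∧ ∀ x, ∃ j, 0.95 * ‖x‖ ≤ ξ j x := by
  have : ProperSpace X := FiniteDimensional.proper ℝ X
  choose ξ h1 h2 using fun j => exists_dual_vector'' ℝ (TopologicalSpace.denseSeq X j)
  refine ⟨ξ, h1, fun x => ?_⟩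
  rcases eq_or_ne x 0 with rfl | hx
  · exact ⟨0, by simp⟩
  have hp : 0 < ‖x‖ := norm_pos_iff.mpr hx
  obtain ⟨j, hj⟩ := (TopologicalSpace.denseRange_denseSeq X).exists_dist_lt x
    (show 0 < 0.02 * ‖x‖ by positivity)
  refine ⟨j, ?_⟩
  set y := TopologicalSpace.denseSeq X j
  rw [dist_eq_norm] at hj
  have e1 : ξ j y = ‖y‖ := by simpa using h2 j
  have e2 : |ξ j (x - y)| ≤ ‖x - y‖ := by
    simpa using (ξ j).le_of_opNorm_le (h1 j) (x - y)
  have e3 : ξ j (x - y) = ξ j x - ξ j y := map_sub _ _ _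
  have e4 : ‖x‖ ≤ ‖x - y‖ + ‖y‖ := by simpa using norm_add_le (x - y) y
  have := (abs_le.mp e2).1
  linarith

theorem integrable_norm_map {ι : Type*} [Fintype ι] {X : Type*} [NormedAddCommGroup X]
    [NormedSpace ℝ X] (T : EuclideanSpace ℝ ι →L[ℝ] X) :
    Integrable (fun g => ‖T g‖) (stdGaussian (EuclideanSpace ℝ ι)) := by
  have h : Integrable (fun g : EuclideanSpace ℝ ι => ‖T‖ * ‖g‖) (stdGaussian _) :=
    (IsGaussian.integrable_id (μ := stdGaussian (EuclideanSpace ℝ ι))).norm.const_mul _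
  refine h.mono' (by fun_prop) (ae_of_all _ fun g => ?_)
  simpa using T.le_opNorm g

theorem integrable_exp_norm_map {ι : Type*} [Fintype ι] {X : Type*} [NormedAddCommGroup X]
    [NormedSpace ℝ X] (T : EuclideanSpace ℝ ι →L[ℝ] X) (c : ℝ) (hc : 0 ≤ c) :
    Integrable (fun g => Real.exp (c * ‖T g‖)) (stdGaussian (EuclideanSpace ℝ ι)) := by
  refine (integrable_exp_norm (ι := ι) (c * ‖T‖)).mono' (by fun_prop) (ae_of_all _ fun g => ?_)
  rw [Real.norm_eq_abs, Real.abs_exp]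
  apply Real.exp_le_exp.mpr
  rw [mul_assoc]
  exact mul_le_mul_of_nonneg_left (T.le_opNorm g) hc

/-- Comparison of `‖T u‖ - ‖T v‖` for independent standard Gaussian `u`, `v` with a Gaussian variable.
Rotation of `(u, v)` by the angle `π / 4` preserves the joint law, and `‖T u‖ - ‖T v‖` is at most
`D + D ∘ R`, where `R` is the rotation and, for fixed `u`, the function
`D (u, v) = (1 - 0.95 c) ‖T u‖ - c ξ (T v)`, `c = √2 / 2`, is Gaussian in `v`. Here `ξ` is a functional
of norm at most one, depending on `u`, that almost norms `T u`. -/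
theorem lintegral_exp_diff_le {ι : Type*} [Fintype ι] {X : Type*} [NormedAddCommGroup X]
    [NormedSpace ℝ X] [FiniteDimensional ℝ X] (T : EuclideanSpace ℝ ι →L[ℝ] X) (hT : ‖T‖ ≤ 1)
    (l : ℝ) (hl : 0 ≤ l) :
    ∫⁻ p, ENNReal.ofReal (Real.exp (l * (‖T p.1‖ - ‖T p.2‖)))
        ∂((stdGaussian (EuclideanSpace ℝ ι)).prod (stdGaussian (EuclideanSpace ℝ ι))) ≤
      ENNReal.ofReal (Real.exp (l ^ 2)) *
        ∫⁻ g, ENNReal.ofReal (Real.exp (l * (2 / 3) * ‖T g‖))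
          ∂(stdGaussian (EuclideanSpace ℝ ι)) := by
  classical
  set μ := stdGaussian (EuclideanSpace ℝ ι) with hμ
  obtain ⟨ξ, hξ1, hξ2⟩ := exists_norming_seq X
  have hTm : Measurable fun g => ‖T g‖ := T.continuous.norm.measurable
  have hξT : ∀ k, Measurable fun g => ξ k (T g) := fun k =>
    ((ξ k).continuous.comp T.continuous).measurable
  let J : EuclideanSpace ℝ ι → ℕ := fun u => Nat.find (hξ2 (T u))
  have hJm : Measurable J := by
    apply measurable_find
    intro k
    exact measurableSet_le (hTm.const_mul _) (hξT k)
  have hJ : ∀ u, 0.95 * ‖T u‖ ≤ ξ (J u) (T u) := fun u => Nat.find_spec (hξ2 (T u))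
  set c : ℝ := √2 / 2 with hc
  have hc2 : c ^ 2 = 1 / 2 := by rw [hc, div_pow, Real.sq_sqrt (by norm_num)]; norm_num
  have hc0 : 0 < c := by positivity
  have hcl : 0.707 ≤ c := by
    by_contra h
    push Not at h
    nlinarith
  let D : EuclideanSpace ℝ ι × EuclideanSpace ℝ ι → ℝ :=
    fun p => (1 - 0.95 * c) * ‖T p.1‖ - c * ξ (J p.1) (T p.2)
  let R := ContinuousLinearMap.rotation (E := EuclideanSpace ℝ ι) (Real.pi / 4)
  have hR : (μ.prod μ).map R = μ.prod μ :=
    IsGaussian.map_rotation_eq_self (by simpa using integral_id_stdGaussian) _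
  have hRa : ∀ p, R p = (c • p.1 + c • p.2, -c • p.1 + c • p.2) := by
    intro p
    simp only [R, ContinuousLinearMap.rotation_apply, Real.cos_pi_div_four, Real.sin_pi_div_four, hc]
  have hb : ∀ j x, ξ j x ≤ ‖x‖ := fun j x => by
    have := (ξ j).le_of_opNorm_le (hξ1 j) x
    rw [one_mul] at this
    exact (le_abs_self _).trans this
  have hpt : ∀ p, ‖T p.1‖ - ‖T p.2‖ ≤ D p + D (R p) := by
    intro p
    have e1 : c * ξ (J p.1) (T p.1) + c * ξ (J p.1) (T p.2) ≤ ‖T (R p).1‖ := by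
      have := hb (J p.1) (T (R p).1)
      rw [hRa] at this ⊢
      simpa using this
    have e2 : p.2 = c • (R p).1 + c • (R p).2 := by
      rw [hRa]
      simp only [smul_add, smul_smul, neg_smul, smul_neg]
      have : c * c = 1 / 2 := by rw [← hc2]; ring
      rw [this]
      module
    have e3 : c * ξ (J (R p).1) (T (R p).1) + c * ξ (J (R p).1) (T (R p).2) ≤ ‖T p.2‖ := by
      have := hb (J (R p).1) (T p.2)
      calc _ = ξ (J (R p).1) (T p.2) := by
            conv_rhs => rw [e2]
            simp
        _ ≤ _ := this
    have e4 := mul_le_mul_of_nonneg_left (hJ p.1) hc0.le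
    have e5 := mul_le_mul_of_nonneg_left (hJ (R p).1) hc0.le
    simp only [D]
    nlinarith
  have hξm : Measurable fun p : EuclideanSpace ℝ ι × EuclideanSpace ℝ ι => ξ (J p.1) (T p.2) := by
    have : Measurable fun q : ℕ × EuclideanSpace ℝ ι => ξ q.1 (T q.2) :=
      measurable_from_prod_countable_right fun j => hξT j
    exact this.comp ((hJm.comp measurable_fst).prodMk measurable_snd)
  have hDm : Measurable D := by
    exact ((hTm.comp measurable_fst).const_mul _).sub (hξm.const_mul _)
  let F : EuclideanSpace ℝ ι × EuclideanSpace ℝ ι → ℝ≥0∞ :=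
    fun p => ENNReal.ofReal (Real.exp (2 * l * D p))
  have hFm : Measurable F := by fun_prop
  have s1 : ∫⁻ p, ENNReal.ofReal (Real.exp (l * (‖T p.1‖ - ‖T p.2‖))) ∂(μ.prod μ) ≤
      ∫⁻ p, (2⁻¹ * F p + 2⁻¹ * F (R p)) ∂(μ.prod μ) := by
    apply lintegral_mono
    intro p
    have h2 : (2⁻¹ : ℝ≥0∞) = ENNReal.ofReal (1 / 2) := by
      rw [one_div, ENNReal.ofReal_inv_of_pos (by norm_num)]; simp
    simp only [F]
    rw [h2, ← ENNReal.ofReal_mul (by norm_num), ← ENNReal.ofReal_mul (by norm_num),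
      ← ENNReal.ofReal_add (by positivity) (by positivity)]
    apply ENNReal.ofReal_le_ofReal
    have k1 : Real.exp (l * (‖T p.1‖ - ‖T p.2‖)) ≤
        Real.exp (l * D p) * Real.exp (l * D (R p)) := by
      rw [← Real.exp_add]
      apply Real.exp_le_exp.mpr
      rw [← mul_add]
      exact mul_le_mul_of_nonneg_left (hpt p) hl
    have k2 : ∀ x : ℝ, Real.exp (2 * l * x) = Real.exp (l * x) ^ 2 := by
      intro x; rw [← Real.exp_nat_mul]; congr 1; push_cast; ring
    rw [k2, k2]
    nlinarith [sq_nonneg (Real.exp (l * D p) - Real.exp (l * D (R p)))]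
  have s2 : ∫⁻ p, (2⁻¹ * F p + 2⁻¹ * F (R p)) ∂(μ.prod μ) = ∫⁻ p, F p ∂(μ.prod μ) := by
    have hRm : Measurable R := R.continuous.measurable
    have hFR : Measurable fun p => F (R p) := hFm.comp hRm
    rw [lintegral_add_left (hFm.const_mul _), lintegral_const_mul _ hFm,
      lintegral_const_mul _ hFR, ← lintegral_map hFm hRm, hR, ← add_mul,
      ENNReal.inv_two_add_inv_two, one_mul]
  have s3 : ∫⁻ p, F p ∂(μ.prod μ) ≤ ∫⁻ g, ENNReal.ofReal (Real.exp (l ^ 2)) *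
      ENNReal.ofReal (Real.exp (l * (2 / 3) * ‖T g‖)) ∂μ := by
    rw [lintegral_prod _ hFm.aemeasurable]
    apply lintegral_mono
    intro u
    let L : EuclideanSpace ℝ ι →L[ℝ] ℝ := (-(2 * l * c)) • (ξ (J u)).comp T
    have hL : ‖L‖ ^ 2 ≤ 2 * l ^ 2 := by
      have : ‖L‖ ≤ 2 * l * c := by
        calc ‖L‖ ≤ ‖-(2 * l * c)‖ * ‖(ξ (J u)).comp T‖ := (norm_smul _ _).le
          _ ≤ ‖-(2 * l * c)‖ * (1 * 1) := by
              gcongr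
              exact (ContinuousLinearMap.opNorm_comp_le _ _).trans (by gcongr; exact hξ1 _)
          _ = 2 * l * c := by rw [norm_neg, Real.norm_of_nonneg (by positivity)]; ring
      calc ‖L‖ ^ 2 ≤ (2 * l * c) ^ 2 := by gcongr
        _ = 4 * l ^ 2 * c ^ 2 := by ring
        _ = 2 * l ^ 2 := by rw [hc2]; ring
    have : ∀ v, F (u, v) = ENNReal.ofReal (Real.exp (2 * l * ((1 - 0.95 * c) * ‖T u‖))) *
        ENNReal.ofReal (Real.exp (L v)) := by
      intro v
      rw [← ENNReal.ofReal_mul (by positivity), ← Real.exp_add]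
      simp only [F, D, L, smul_apply, ContinuousLinearMap.comp_apply,
        smul_eq_mul]
      congr 2
      ring
    simp_rw [this]
    rw [lintegral_const_mul _ (by fun_prop), lintegral_exp_dual, mul_comm]
    refine mul_le_mul' (ENNReal.ofReal_le_ofReal (Real.exp_le_exp.mpr (by linarith)))
      (ENNReal.ofReal_le_ofReal (Real.exp_le_exp.mpr ?_))
    have : 0 ≤ l * ‖T u‖ := by positivity
    nlinarith
  have hTe : Measurable fun g => ENNReal.ofReal (Real.exp (l * (2 / 3) * ‖T g‖)) :=
    (Real.measurable_exp.comp (hTm.const_mul _)).ennreal_ofReal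
  rw [lintegral_const_mul _ hTe] at s3
  exact s1.trans (s2.le.trans s3)

/-- Sub-Gaussian exponential moments of the norm of a Gaussian vector, from the comparison above,
Jensen's inequality for the variable `-‖T v‖`, and absorption of the moment of order `2 l / 3`. -/
theorem integral_exp_norm_le {ι : Type*} [Fintype ι] {X : Type*} [NormedAddCommGroup X]
    [NormedSpace ℝ X] [FiniteDimensional ℝ X] (T : EuclideanSpace ℝ ι →L[ℝ] X) (hT : ‖T‖ ≤ 1)
    (l : ℝ) (hl : 0 ≤ l) :
    ∫⁻ g, ENNReal.ofReal (Real.exp (l * ‖T g‖)) ∂(stdGaussian (EuclideanSpace ℝ ι)) ≤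
      ENNReal.ofReal (Real.exp
        (3 * (l ^ 2 + l * ∫ g, ‖T g‖ ∂(stdGaussian (EuclideanSpace ℝ ι))))) := by
  set μ := stdGaussian (EuclideanSpace ℝ ι) with hμ
  set e := ∫ g, ‖T g‖ ∂μ with he
  have key := lintegral_exp_diff_le T hT l hl
  rw [← hμ] at key
  have hi : ∀ c, 0 ≤ c → Integrable (fun g => Real.exp (c * ‖T g‖)) μ :=
    fun c hc => integrable_exp_norm_map T c hc
  have hin : Integrable (fun g => Real.exp (-(l * ‖T g‖))) μ := by
    refine (integrable_const (1 : ℝ)).mono' (by fun_prop) (ae_of_all _ fun g => ?_)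
    rw [Real.norm_eq_abs, Real.abs_exp, Real.exp_le_one_iff]
    have : 0 ≤ l * ‖T g‖ := by positivity
    linarith
  have hconv : ∀ c, 0 ≤ c → ∫⁻ g, ENNReal.ofReal (Real.exp (c * ‖T g‖)) ∂μ =
      ENNReal.ofReal (∫ g, Real.exp (c * ‖T g‖) ∂μ) := fun c hc =>
    (ofReal_integral_eq_lintegral_ofReal (hi c hc) (ae_of_all _ fun x => (Real.exp_pos _).le)).symm
  -- Jensen, via the tangent line of `exp` at `-l e`
  have hjen : Real.exp (-(l * e)) ≤ ∫ g, Real.exp (-(l * ‖T g‖)) ∂μ := by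
    have hlin : Integrable (fun g => Real.exp (-(l * e)) * (1 - l * (‖T g‖ - e))) μ := by
      have := integrable_norm_map T
      rw [← hμ] at this
      fun_prop
    have h1 : ∫ g, Real.exp (-(l * e)) * (1 - l * (‖T g‖ - e)) ∂μ = Real.exp (-(l * e)) := by
      have := integrable_norm_map T
      rw [← hμ] at this
      rw [integral_const_mul, integral_sub (integrable_const _) (by fun_prop), integral_const_mul,
        integral_sub this (integrable_const _)]
      simp [he]
    rw [← h1]
    apply integral_mono hlin hin
    intro g
    simp only
    have := Real.add_one_le_exp (-(l * (‖T g‖ - e)))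
    calc Real.exp (-(l * e)) * (1 - l * (‖T g‖ - e))
        ≤ Real.exp (-(l * e)) * Real.exp (-(l * (‖T g‖ - e))) := by
          gcongr; linarith
      _ = Real.exp (-(l * ‖T g‖)) := by rw [← Real.exp_add]; congr 1; ring
  have hTm : Measurable fun g => ‖T g‖ := T.continuous.norm.measurable
  have hm1 : ∀ c, Measurable fun g => ENNReal.ofReal (Real.exp (c * ‖T g‖)) := fun c =>
    (Real.measurable_exp.comp (hTm.const_mul _)).ennreal_ofReal
  have hm2 : Measurable fun g => ENNReal.ofReal (Real.exp (-(l * ‖T g‖))) :=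
    (Real.measurable_exp.comp (hTm.const_mul _).neg).ennreal_ofReal
  have hleft : ∫⁻ p, ENNReal.ofReal (Real.exp (l * (‖T p.1‖ - ‖T p.2‖))) ∂(μ.prod μ) =
      ENNReal.ofReal (∫ g, Real.exp (l * ‖T g‖) ∂μ) *
        ENNReal.ofReal (∫ g, Real.exp (-(l * ‖T g‖)) ∂μ) := by
    rw [ofReal_integral_eq_lintegral_ofReal (hi l hl) (ae_of_all _ fun x => (Real.exp_pos _).le),
      ofReal_integral_eq_lintegral_ofReal hin (ae_of_all _ fun x => (Real.exp_pos _).le),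
      ← lintegral_prod_mul (hm1 l).aemeasurable hm2.aemeasurable]
    apply lintegral_congr
    intro p
    rw [← ENNReal.ofReal_mul (by positivity), ← Real.exp_add]
    congr 2; ring
  rw [hleft, hconv _ (by positivity), ← ENNReal.ofReal_mul (by positivity),
    ← ENNReal.ofReal_mul (by positivity), ENNReal.ofReal_le_ofReal_iff (by positivity)] at key
  rw [hconv l hl]
  apply ENNReal.ofReal_le_ofReal
  set φ := ∫ g, Real.exp (l * ‖T g‖) ∂μ with hφ
  have hφ0 : 0 ≤ φ := by positivity
  have k1 : φ ≤ Real.exp (l ^ 2 + l * e) * ∫ g, Real.exp (l * (2 / 3) * ‖T g‖) ∂μ := by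
    have : φ * Real.exp (-(l * e)) ≤
        Real.exp (l ^ 2) * ∫ g, Real.exp (l * (2 / 3) * ‖T g‖) ∂μ :=
      (mul_le_mul_of_nonneg_left hjen hφ0).trans key
    calc φ = (φ * Real.exp (-(l * e))) * Real.exp (l * e) := by
          rw [mul_assoc, ← Real.exp_add]; simp
      _ ≤ (Real.exp (l ^ 2) * ∫ g, Real.exp (l * (2 / 3) * ‖T g‖) ∂μ) * Real.exp (l * e) := by
          gcongr
      _ = _ := by rw [Real.exp_add]; ring
  -- arithmetic-geometric mean inequality with exponents `1/3, 2/3`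
  have k2 : Real.exp (l ^ 2 + l * e) * ∫ g, Real.exp (l * (2 / 3) * ‖T g‖) ∂μ ≤
      2 / 3 * φ + 1 / 3 * Real.exp (3 * (l ^ 2 + l * e)) := by
    rw [← integral_const_mul]
    have : 2 / 3 * φ + 1 / 3 * Real.exp (3 * (l ^ 2 + l * e)) =
        ∫ g, (2 / 3 * Real.exp (l * ‖T g‖) + 1 / 3 * Real.exp (3 * (l ^ 2 + l * e))) ∂μ := by
      rw [integral_add ((hi l hl).const_mul _) (integrable_const _), integral_const_mul]
      simp [hφ]
    rw [this]
    apply integral_mono ((hi _ (by positivity)).const_mul _)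
      (((hi l hl).const_mul _).add (integrable_const _))
    intro g
    simp only [Pi.add_apply]
    set x := Real.exp (l ^ 2 + l * e)
    set t := Real.exp (l / 3 * ‖T g‖) with ht
    have e1 : Real.exp (l * (2 / 3) * ‖T g‖) = t ^ 2 := by
      rw [ht, ← Real.exp_nat_mul]; congr 1; push_cast; ring
    have e2 : Real.exp (l * ‖T g‖) = t ^ 3 := by
      rw [ht, ← Real.exp_nat_mul]; congr 1; push_cast; ring
    have e3 : Real.exp (3 * (l ^ 2 + l * e)) = x ^ 3 := by
      rw [← Real.exp_nat_mul]; congr 1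
    rw [e1, e2, e3]
    have hx : 0 < x := Real.exp_pos _
    have ht0 : 0 < t := Real.exp_pos _
    nlinarith [mul_nonneg (add_pos hx (add_pos ht0 ht0)).le (sq_nonneg (t - x))]
  linarith

end Gaussian

/-! ### The projective norm and trace duality -/

section Proj
variable {X F : Type*} [NormedAddCommGroup X] [NormedSpace ℝ X]
    [NormedAddCommGroup F] [NormedSpace ℝ F]

/-- The coordinate functionals of the chosen basis of `X`, as continuous functionals. -/
noncomputable def coordCLM (X : Type*) [NormedAddCommGroup X] [NormedSpace ℝ X]
    [FiniteDimensional ℝ X] (k : Fin (Module.finrank ℝ X)) : X →L[ℝ] ℝ :=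
  LinearMap.toContinuousLinearMap ((Module.finBasis ℝ X).coord k)

theorem sum_coordCLM [FiniteDimensional ℝ X] (x : X) :
    ∑ k, coordCLM X k x • Module.finBasis ℝ X k = x := by
  simp [coordCLM]

theorem projNorm_set_nonempty [FiniteDimensional ℝ X] (u : X →L[ℝ] F) :
    { r : ℝ | ∃ (k : ℕ) (η : Fin k → (X →L[ℝ] ℝ)) (f : Fin k → F),
    (∀ x, u x = ∑ i, η i x • f i) ∧ r = ∑ i, ‖η i‖ * ‖f i‖ }.Nonempty := by
  refine ⟨_, _, coordCLM X, fun k => u (Module.finBasis ℝ X k), fun x => ?_, rfl⟩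
  conv_lhs => rw [← sum_coordCLM x]
  simp

theorem projNorm_set_bddBelow (u : X →L[ℝ] F) :
    BddBelow { r : ℝ | ∃ (k : ℕ) (η : Fin k → (X →L[ℝ] ℝ)) (f : Fin k → F),
    (∀ x, u x = ∑ i, η i x • f i) ∧ r = ∑ i, ‖η i‖ * ‖f i‖ } := by
  refine ⟨0, ?_⟩
  rintro r ⟨k, η, f, -, rfl⟩
  positivity

theorem projNorm_le (u : X →L[ℝ] F) {k : ℕ} (η : Fin k → (X →L[ℝ] ℝ)) (f : Fin k → F)
    (h : ∀ x, u x = ∑ i, η i x • f i) : projNorm u ≤ ∑ i, ‖η i‖ * ‖f i‖ :=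
  csInf_le (projNorm_set_bddBelow u) ⟨k, η, f, h, rfl⟩

theorem exists_lt_projNorm_add [FiniteDimensional ℝ X] (u : X →L[ℝ] F) {ε : ℝ} (hε : 0 < ε) :
    ∃ (k : ℕ) (η : Fin k → (X →L[ℝ] ℝ)) (f : Fin k → F),
      (∀ x, u x = ∑ i, η i x • f i) ∧ ∑ i, ‖η i‖ * ‖f i‖ < projNorm u + ε := by
  obtain ⟨r, ⟨k, η, f, h, rfl⟩, hr⟩ := exists_lt_of_csInf_lt (projNorm_set_nonempty u)
    (show sInf _ < projNorm u + ε by rw [projNorm]; linarith)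
  exact ⟨k, η, f, h, hr⟩

theorem projNorm_nonneg [FiniteDimensional ℝ X] (u : X →L[ℝ] F) : 0 ≤ projNorm u := by
  apply le_csInf (projNorm_set_nonempty u)
  rintro r ⟨k, η, f, -, rfl⟩
  positivity

theorem projNorm_add_le [FiniteDimensional ℝ X] (u v : X →L[ℝ] F) :
    projNorm (u + v) ≤ projNorm u + projNorm v := by
  refine le_of_forall_pos_lt_add fun ε hε => ?_
  obtain ⟨k, η, f, h, hr⟩ := exists_lt_projNorm_add u (half_pos hε)
  obtain ⟨k', η', f', h', hr'⟩ := exists_lt_projNorm_add v (half_pos hε)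
  have := projNorm_le (u + v) (Fin.append η η') (Fin.append f f') (fun x => by
    simp [Fin.sum_univ_add, h, h'])
  simp only [Fin.sum_univ_add, Fin.append_left, Fin.append_right] at this
  linarith

theorem projNorm_smul_le [FiniteDimensional ℝ X] (u : X →L[ℝ] F) {c : ℝ} (hc : 0 ≤ c) :
    projNorm (c • u) ≤ c * projNorm u := by
  refine le_of_forall_pos_le_add fun ε hε => ?_
  obtain ⟨k, η, f, h, hr⟩ := exists_lt_projNorm_add u
    (show 0 < ε / (c + 1) by positivity)
  have := projNorm_le (c • u) (fun i => c • η i) f (fun x => by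
    simp [h, Finset.smul_sum, mul_smul])
  simp only [norm_smul, Real.norm_of_nonneg hc, mul_assoc, ← Finset.mul_sum] at this
  refine this.trans ((mul_le_mul_of_nonneg_left hr.le hc).trans ?_)
  have h2 : c * (ε / (c + 1)) ≤ ε := by
    rw [mul_div_assoc', div_le_iff₀ (by positivity)]
    nlinarith
  linarith

theorem projNorm_smul [FiniteDimensional ℝ X] (u : X →L[ℝ] F) {c : ℝ} (hc : 0 < c) :
    projNorm (c • u) = c * projNorm u := by
  apply le_antisymm (projNorm_smul_le u hc.le)
  have := projNorm_smul_le (c • u) (inv_pos.mpr hc).le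
  rw [smul_smul, inv_mul_cancel₀ hc.ne', one_smul] at this
  calc c * projNorm u ≤ c * (c⁻¹ * projNorm (c • u)) := by gcongr
    _ = projNorm (c • u) := by field_simp

theorem projNorm_zero [FiniteDimensional ℝ X] : projNorm (0 : X →L[ℝ] F) = 0 := by
  apply le_antisymm _ (projNorm_nonneg _)
  simpa using projNorm_le (0 : X →L[ℝ] F) (k := 0) Fin.elim0 Fin.elim0 (by simp)

end Proj

section Trace
variable {X H : Type*} [NormedAddCommGroup X] [NormedSpace ℝ X] [FiniteDimensional ℝ X]
    [NormedAddCommGroup H] [InnerProductSpace ℝ H]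

theorem sum_apply_basis_smul_coordCLM (η : X →L[ℝ] ℝ) :
    ∑ k, η (Module.finBasis ℝ X k) • coordCLM X k = η := by
  ext x
  conv_rhs => rw [← sum_coordCLM x]
  simp [mul_comm]

/-- The trace pairing of `G : X* → H` with `v : X → H`, defined through the coordinates of a basis of
`X`. It does not depend on the basis: `tracePair_eq` computes it from any representation of `v`. -/
noncomputable def tracePair (G : (X →L[ℝ] ℝ) →L[ℝ] H) (v : X →L[ℝ] H) : ℝ :=
  ∑ k, inner ℝ (G (coordCLM X k)) (v (Module.finBasis ℝ X k))

theorem tracePair_eq (G : (X →L[ℝ] ℝ) →L[ℝ] H) (v : X →L[ℝ] H) {ι : Type*} [Fintype ι]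
    (η : ι → (X →L[ℝ] ℝ)) (f : ι → H) (h : ∀ x, v x = ∑ i, η i x • f i) :
    tracePair G v = ∑ i, inner ℝ (G (η i)) (f i) := by
  unfold tracePair
  simp_rw [h, inner_sum, inner_smul_right]
  rw [Finset.sum_comm]
  refine Finset.sum_congr rfl fun i _ => ?_
  conv_rhs => rw [← sum_apply_basis_smul_coordCLM (η i)]
  simp [sum_inner, inner_smul_left]

theorem tracePair_le (G : (X →L[ℝ] ℝ) →L[ℝ] H) (v : X →L[ℝ] H) :
    tracePair G v ≤ ‖G‖ * projNorm v := by
  refine le_of_forall_pos_le_add fun ε hε => ?_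
  obtain ⟨k, η, f, h, hr⟩ := exists_lt_projNorm_add v
    (show 0 < ε / (‖G‖ + 1) by positivity)
  rw [tracePair_eq G v η f h]
  have h1 : ∑ i, inner ℝ (G (η i)) (f i) ≤ ‖G‖ * ∑ i, ‖η i‖ * ‖f i‖ := by
    rw [Finset.mul_sum]
    refine Finset.sum_le_sum fun i _ => ?_
    calc inner ℝ (G (η i)) (f i) ≤ ‖G (η i)‖ * ‖f i‖ := real_inner_le_norm _ _
      _ ≤ ‖G‖ * ‖η i‖ * ‖f i‖ := by gcongr; exact G.le_opNorm _
      _ = _ := by ring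
  have h2 : ‖G‖ * (ε / (‖G‖ + 1)) ≤ ε := by
    rw [mul_div_assoc', div_le_iff₀ (by positivity)]
    nlinarith
  nlinarith [norm_nonneg G]

end Trace

/-- The `j`-th unit vector of `ℓ₂`. -/
noncomputable def ellBasis (j : ℕ) : ellTwo := lp.single 2 j (1 : ℝ)

theorem inner_ellBasis (i j : ℕ) :
    inner ℝ (ellBasis i) (ellBasis j) = if i = j then (1 : ℝ) else 0 := by
  unfold ellBasis
  rw [lp.inner_single_left]
  simp [Pi.single_apply]

/-- The map `Y → ℓ₂` with the functionals `a j` as its coordinates. -/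
noncomputable def emb {Y : Type*} [NormedAddCommGroup Y] [NormedSpace ℝ Y] {m : ℕ}
    (a : Fin m → (Y →L[ℝ] ℝ)) : Y →L[ℝ] ellTwo :=
  ∑ j, (a j).smulRight (ellBasis j)

theorem inner_emb {Y Z : Type*} [NormedAddCommGroup Y] [NormedSpace ℝ Y]
    [NormedAddCommGroup Z] [NormedSpace ℝ Z] {m : ℕ}
    (a : Fin m → (Y →L[ℝ] ℝ)) (b : Fin m → (Z →L[ℝ] ℝ)) (y : Y) (z : Z) :
    inner ℝ (emb a y) (emb b z) = ∑ j, a j y * b j z := by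
  simp [emb, sum_inner, inner_sum, inner_smul_left, inner_smul_right, inner_ellBasis, Fin.val_inj]
  exact Finset.sum_congr rfl fun _ _ => mul_comm _ _

theorem norm_emb_sq {Y : Type*} [NormedAddCommGroup Y] [NormedSpace ℝ Y] {m : ℕ}
    (a : Fin m → (Y →L[ℝ] ℝ)) (y : Y) : ‖emb a y‖ ^ 2 = ∑ j, a j y ^ 2 := by
  rw [← real_inner_self_eq_norm_sq, inner_emb]
  simp [sq]

theorem norm_emb_le {Y : Type*} [NormedAddCommGroup Y] [NormedSpace ℝ Y] {m : ℕ}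
    (a : Fin m → (Y →L[ℝ] ℝ)) (w : ℝ) (hw : 0 ≤ w) (h : ∀ y, ∑ j, a j y ^ 2 ≤ w ^ 2 * ‖y‖ ^ 2) :
    ‖emb a‖ ≤ w := by
  refine ContinuousLinearMap.opNorm_le_bound _ hw fun y => ?_
  rw [← abs_of_nonneg (norm_nonneg (emb a y)), ← abs_of_nonneg (show 0 ≤ w * ‖y‖ by positivity),
    ← sq_le_sq, norm_emb_sq, mul_pow]
  exact h y

/-- The inequality `‖A ⊗ id : X ⊗̌ ℓ₂ → X* ⊗̂ ℓ₂‖ ≤ C ‖A‖` for a single space `X`. -/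
def GTBound (X : Type*) [NormedAddCommGroup X] [NormedSpace ℝ X] (C : ℝ) : Prop :=
  ∀ (A : X →L[ℝ] (X →L[ℝ] ℝ)) (u : (X →L[ℝ] ℝ) →L[ℝ] ellTwo),
    projNorm (u.comp A.flip) ≤ C * ‖A‖ * ‖u‖

/-- The Grothendieck inequality contained in `GTBound`: for vectors whose weak `ℓ₂` norms are at
most `wx`, `wy`, obtained by pairing `u ∘ A` with the operator defined by the `x j`. -/
theorem GTBound.sum_le {X : Type*} [NormedAddCommGroup X] [NormedSpace ℝ X]
    [FiniteDimensional ℝ X] {C : ℝ} (hC : 0 ≤ C) (h : GTBound X C)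
    (A : X →L[ℝ] (X →L[ℝ] ℝ)) {m : ℕ} (x y : Fin m → X) {wx wy : ℝ} (hwx : 0 ≤ wx) (hwy : 0 ≤ wy)
    (hx : ∀ ξ : X →L[ℝ] ℝ, ∑ j, ξ (x j) ^ 2 ≤ wx ^ 2 * ‖ξ‖ ^ 2)
    (hy : ∀ ξ : X →L[ℝ] ℝ, ∑ j, ξ (y j) ^ 2 ≤ wy ^ 2 * ‖ξ‖ ^ 2) :
    ∑ j, A (x j) (y j) ≤ C * ‖A‖ * wx * wy := by
  let ev : X → ((X →L[ℝ] ℝ) →L[ℝ] ℝ) := fun z => ContinuousLinearMap.apply ℝ ℝ z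
  let G := emb fun j => ev (x j)
  let u := emb fun j => ev (y j)
  have hG : ‖G‖ ≤ wx := norm_emb_le _ _ hwx fun ξ => by simpa [ev] using hx ξ
  have hu : ‖u‖ ≤ wy := norm_emb_le _ _ hwy fun ξ => by simpa [ev] using hy ξ
  have h1 : projNorm (u.comp A) ≤ C * ‖A‖ * ‖u‖ := by
    have := h A.flip u
    rwa [ContinuousLinearMap.flip_flip, ContinuousLinearMap.opNorm_flip] at this
  have h2 : tracePair G (u.comp A) = ∑ j, A (x j) (y j) := by
    rw [tracePair_eq G (u.comp A) (fun j => A.flip (y j)) (fun j : Fin m => ellBasis j)]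
    · simp [G, emb, sum_inner, inner_smul_left, inner_ellBasis, Fin.val_inj, ev]
    · intro z
      simp [u, emb, ev]
  rw [← h2]
  calc tracePair G (u.comp A) ≤ ‖G‖ * projNorm (u.comp A) := tracePair_le _ _
    _ ≤ wx * (C * ‖A‖ * wy) := by
      apply mul_le_mul hG (h1.trans (by gcongr)) (projNorm_nonneg _) hwx
    _ = _ := by ring

/-! ### Weak norms and summing operators -/

section Weak
variable {X Y : Type*} [NormedAddCommGroup X] [NormedSpace ℝ X]
    [NormedAddCommGroup Y] [NormedSpace ℝ Y]

theorem weakNorm_set_bddAbove {p : ℝ} (hp : 0 < p) {m : ℕ} (x : Fin m → X) :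
    BddAbove { s : ℝ | ∃ φ : X →L[ℝ] ℝ, ‖φ‖ ≤ 1 ∧ s = (∑ i, |φ (x i)| ^ p) ^ (1/p) } := by
  refine ⟨(∑ i, ‖x i‖ ^ p) ^ (1/p), ?_⟩
  rintro s ⟨φ, hφ, rfl⟩
  gcongr with i
  simpa using φ.le_of_opNorm_le hφ (x i)

theorem le_weakNorm {p : ℝ} (hp : 0 < p) {m : ℕ} (x : Fin m → X) (φ : X →L[ℝ] ℝ) (hφ : ‖φ‖ ≤ 1) :
    (∑ i, |φ (x i)| ^ p) ^ (1/p) ≤ weakNorm p x :=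
  le_csSup (weakNorm_set_bddAbove hp x) ⟨φ, hφ, rfl⟩

theorem weakNorm_nonneg {p : ℝ} {m : ℕ} (x : Fin m → X) : 0 ≤ weakNorm p x := by
  apply Real.sSup_nonneg
  rintro s ⟨φ, -, rfl⟩
  positivity

theorem weakNorm_le {p : ℝ} {m : ℕ} (x : Fin m → X) {M : ℝ}
    (h : ∀ φ : X →L[ℝ] ℝ, ‖φ‖ ≤ 1 → (∑ i, |φ (x i)| ^ p) ^ (1/p) ≤ M) : weakNorm p x ≤ M := by
  refine csSup_le ⟨_, 0, by simp, rfl⟩ ?_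
  rintro s ⟨φ, hφ, rfl⟩
  exact h φ hφ

theorem sum_abs_le_weakNorm {m : ℕ} (x : Fin m → X) (φ : X →L[ℝ] ℝ) :
    ∑ i, |φ (x i)| ≤ weakNorm 1 x * ‖φ‖ := by
  rcases eq_or_ne φ 0 with rfl | h
  · simp
  have hp : 0 < ‖φ‖ := norm_pos_iff.mpr h
  have := le_weakNorm one_pos x (‖φ‖⁻¹ • φ) (by rw [norm_smul]; simp [hp.ne'])
  simp only [smul_apply, smul_eq_mul, abs_mul, Real.rpow_one, div_one, ← Finset.mul_sum, abs_inv,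
    abs_norm] at this
  rwa [inv_mul_le_iff₀ hp, mul_comm] at this

theorem sqrt_rpow_aux (a : ℝ) : a ^ (1 / 2 : ℝ) = √a := (Real.sqrt_eq_rpow a).symm

theorem sum_sq_le_weakNorm {m : ℕ} (x : Fin m → X) (φ : X →L[ℝ] ℝ) :
    ∑ i, φ (x i) ^ 2 ≤ weakNorm 2 x ^ 2 * ‖φ‖ ^ 2 := by
  rcases eq_or_ne φ 0 with rfl | h
  · simp
  have hp : 0 < ‖φ‖ := norm_pos_iff.mpr h
  have := le_weakNorm two_pos x (‖φ‖⁻¹ • φ) (by rw [norm_smul]; simp [hp.ne'])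
  simp only [smul_apply, smul_eq_mul, Real.rpow_two, sqrt_rpow_aux, sq_abs, mul_pow,
    ← Finset.mul_sum] at this
  rw [Real.sqrt_le_left (weakNorm_nonneg x), inv_pow, inv_mul_le_iff₀ (by positivity)] at this
  linarith

theorem psum_one_iff {C : ℝ} (hC : 0 ≤ C) (u : X →L[ℝ] Y) :
    PSummingBound 1 C u ↔ ∀ (m : ℕ) (x : Fin m → X) (w : ℝ), 0 ≤ w →
      (∀ φ : X →L[ℝ] ℝ, ∑ i, |φ (x i)| ≤ w * ‖φ‖) → ∑ i, ‖u (x i)‖ ≤ C * w := by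
  constructor
  · intro h m x w hw hx
    have := h m x
    simp only [Real.rpow_one, div_one] at this
    refine this.trans (mul_le_mul_of_nonneg_left (weakNorm_le x fun φ hφ => ?_) hC)
    simp only [Real.rpow_one, div_one]
    exact (hx φ).trans (mul_le_of_le_one_right hw hφ)
  · intro h m x
    simp only [Real.rpow_one, div_one]
    exact h m x _ (weakNorm_nonneg x) (sum_abs_le_weakNorm x)

theorem psum_two_iff {C : ℝ} (hC : 0 ≤ C) (u : X →L[ℝ] Y) :
    PSummingBound 2 C u ↔ ∀ (m : ℕ) (x : Fin m → X) (w : ℝ), 0 ≤ w →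
      (∀ φ : X →L[ℝ] ℝ, ∑ i, φ (x i) ^ 2 ≤ w ^ 2 * ‖φ‖ ^ 2) →
        ∑ i, ‖u (x i)‖ ^ 2 ≤ C ^ 2 * w ^ 2 := by
  constructor
  · intro h m x w hw hx
    have := h m x
    simp only [Real.rpow_two, sqrt_rpow_aux] at this
    have h2 : weakNorm 2 x ≤ w := by
      refine weakNorm_le x fun φ hφ => ?_
      simp only [Real.rpow_two, sqrt_rpow_aux, sq_abs]
      rw [Real.sqrt_le_left hw]
      exact (hx φ).trans (mul_le_of_le_one_right (by positivity) (pow_le_one₀ (norm_nonneg _) hφ))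
    have h3 := this.trans (mul_le_mul_of_nonneg_left h2 hC)
    rwa [Real.sqrt_le_left (by positivity), mul_pow] at h3
  · intro h m x
    simp only [Real.rpow_two, sqrt_rpow_aux]
    rw [Real.sqrt_le_left (mul_nonneg hC (weakNorm_nonneg x)), mul_pow]
    exact h m x _ (weakNorm_nonneg x) (sum_sq_le_weakNorm x)

/-- A `1`-summing operator is `2`-summing with the same constant: test the `1`-summing inequality on
the vectors `‖u x_i‖ x_i` and apply Cauchy-Schwarz. -/
theorem psum_two_of_one {C : ℝ} (hC : 0 ≤ C) {u : X →L[ℝ] Y} (h : PSummingBound 1 C u) :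
    PSummingBound 2 C u := by
  rw [psum_one_iff hC] at h
  rw [psum_two_iff hC]
  intro m x w hw hx
  set S := ∑ i, ‖u (x i)‖ ^ 2 with hS
  have hS0 : 0 ≤ S := by positivity
  have := h m (fun i => ‖u (x i)‖ • x i) (√S * w) (by positivity) (fun φ => by
    simp only [map_smul, smul_eq_mul, abs_mul, abs_norm]
    apply (Real.sum_mul_le_sqrt_mul_sqrt Finset.univ _ _).trans
    rw [← hS, mul_assoc]
    refine mul_le_mul_of_nonneg_left ?_ (Real.sqrt_nonneg _)
    rw [Real.sqrt_le_left (by positivity), mul_pow]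
    simpa using hx φ)
  simp only [map_smul, norm_smul, norm_norm, ← sq, ← hS] at this
  rcases hS0.eq_or_lt with h0 | h0
  · rw [← h0]; positivity
  have h1 : √S * √S = S := Real.mul_self_sqrt hS0
  have h2 : 0 < √S := Real.sqrt_pos.mpr h0
  have h3 : √S ≤ C * w := by
    by_contra hlt
    push Not at hlt
    nlinarith
  calc S = √S ^ 2 := by rw [sq, h1]
    _ ≤ (C * w) ^ 2 := by gcongr
    _ = _ := mul_pow _ _ _

end Weak

/-! ### Factorization through Hilbert space by convex separation -/

theorem sum_eq_sum_comp_of_injective {ι κ M : Type*} [Fintype ι] [Fintype κ] [AddCommMonoid M]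
    (e : ι ↪ κ) (g : κ → M) (hg : ∀ j, (¬ ∃ i, e i = j) → g j = 0) : ∑ j, g j = ∑ i, g (e i) := by
  rw [← Finset.sum_map Finset.univ e g]
  symm
  apply Finset.sum_subset (Finset.subset_univ _)
  intro j _ hj
  apply hg
  simpa using hj

theorem exists_fin_of_mem_convexHull {V : Type*} [NormedAddCommGroup V]
    [NormedSpace ℝ V] {s : Set V} {x : V}
    (hx : x ∈ convexHull ℝ s) : ∃ (m : ℕ) (w : Fin m → ℝ) (z : Fin m → V),
      (∀ i, z i ∈ s) ∧ (∀ i, 0 ≤ w i) ∧ ∑ i, w i = 1 ∧ x = ∑ i, w i • z i := by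
  obtain ⟨ι, _, z, w, hz, -, hw, hw1, hx⟩ := eq_pos_convex_span_of_mem_convexHull hx
  let e := (Fintype.equivFin ι).symm
  refine ⟨_, w ∘ e, z ∘ e, fun i => hz ⟨_, rfl⟩, fun i => (hw _).le, ?_, ?_⟩
  · simpa using (e.sum_comp w).trans hw1
  · exact hx.symm.trans (e.sum_comp fun i => w i • z i).symm

/-- In finite dimension the convex hull of a compact set is compact, since by Carathéodory it is
the continuous image of a simplex times finitely many copies of the set. -/
theorem isCompact_convexHull_of_finiteDimensional {V : Type*} [NormedAddCommGroup V]
    [NormedSpace ℝ V] [FiniteDimensional ℝ V] {s : Set V} (hs : IsCompact s) :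
    IsCompact (convexHull ℝ s) := by
  classical
  rcases s.eq_empty_or_nonempty with rfl | ⟨z0, hz0⟩
  · simp
  set N := Module.finrank ℝ V + 1 with hN
  have hc : IsCompact ((stdSimplex ℝ (Fin N)) ×ˢ (Set.univ.pi fun _ : Fin N => s)) :=
    (isCompact_stdSimplex ℝ (Fin N)).prod (isCompact_univ_pi fun _ => hs)
  have hf : Continuous fun p : (Fin N → ℝ) × (Fin N → V) => ∑ i, p.1 i • p.2 i := by fun_prop
  convert hc.image hf using 1
  apply Set.Subset.antisymm
  · intro x hx
    obtain ⟨ι, _, z, w, hz, hind, hw, hw1, hx⟩ := eq_pos_convex_span_of_mem_convexHull hx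
    have hcard : Fintype.card ι ≤ N := by
      have := hind.card_le_finrank_succ
      have h2 := Submodule.finrank_le (vectorSpan ℝ (Set.range z))
      omega
    let e : ι ↪ Fin N := (Fintype.equivFin ι).toEmbedding.trans (Fin.castLEEmb hcard)
    refine ⟨(Function.extend e w 0, Function.extend e z fun _ => z0), ⟨⟨?_, ?_⟩, ?_⟩, ?_⟩
    · intro j
      by_cases hj : ∃ i, e i = j
      · obtain ⟨i, rfl⟩ := hj
        simp [e.injective.extend_apply, (hw i).le]
      · simp [Function.extend_apply' _ _ _ hj]
    · rw [sum_eq_sum_comp_of_injective e]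
      · simpa [e.injective.extend_apply] using hw1
      · intro j hj
        simp [Function.extend_apply' _ _ _ hj]
    · intro j _
      by_cases hj : ∃ i, e i = j
      · obtain ⟨i, rfl⟩ := hj
        simpa [e.injective.extend_apply] using hz ⟨i, rfl⟩
      · simpa [Function.extend_apply' _ _ _ hj] using hz0
    · simp only
      rw [sum_eq_sum_comp_of_injective e]
      · simpa [e.injective.extend_apply] using hx
      · intro j hj
        simp [Function.extend_apply' _ _ _ hj]
  · rintro _ ⟨⟨w, z⟩, ⟨⟨hw0, hw1⟩, hz⟩, rfl⟩
    exact (convex_convexHull ℝ s).sum_mem (fun i _ => hw0 i) hw1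
      fun i _ => subset_convexHull ℝ s (hz i trivial)

/-- A system of inequalities `b i ≤ ev i p`, affine in `p`, has a solution in the compact convex set
`K` as soon as every combination of finitely many of them with non-negative weights has one. -/
theorem exists_mem_of_weights {V ι : Type*} [NormedAddCommGroup V] [NormedSpace ℝ V]
    {K : Set V} (hKc : IsCompact K) (hKconv : Convex ℝ K) (ev : ι → (V →L[ℝ] ℝ)) (b : ι → ℝ)
    (h : ∀ (m : ℕ) (e : Fin m → ι) (lam : Fin m → ℝ), (∀ j, 0 ≤ lam j) →
      ∃ p ∈ K, ∑ j, lam j * b (e j) ≤ ∑ j, lam j * ev (e j) p) :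
    ∃ p ∈ K, ∀ i, b i ≤ ev i p := by
  classical
  have main : (K ∩ ⋂ q : ι, {p | b q ≤ ev q p}).Nonempty := by
    apply hKc.inter_iInter_nonempty
    · intro q
      exact isClosed_le continuous_const (ev q).continuous
    intro F
    by_contra hne
    let Φ : V →ₗ[ℝ] (F → ℝ) := LinearMap.pi fun q => (ev q).toLinearMap
    have hΦc : Continuous Φ := continuous_pi fun q => (ev q).continuous
    have hconv : Convex ℝ (Φ '' K) := hKconv.linear_image Φ
    let b0 : F → ℝ := fun q => b q
    have hdisj : Disjoint (Φ '' K) (Set.Ici b0) := by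
      rw [Set.disjoint_left]
      rintro _ ⟨p, hp, rfl⟩ hO
      apply hne
      refine ⟨p, hp, ?_⟩
      simp only [Set.mem_iInter]
      exact fun q hq => hO ⟨q, hq⟩
    obtain ⟨f, r, s, hfr, hrs, hfs⟩ :=
      geometric_hahn_banach_compact_closed hconv (hKc.image hΦc) (convex_Ici b0) isClosed_Ici hdisj
    let lam : F → ℝ := fun q => f (Pi.single q 1)
    have hf : ∀ b : F → ℝ, f b = ∑ q, lam q * b q := by
      intro b
      conv_lhs => rw [← Finset.univ_sum_single b]
      rw [map_sum]
      refine Finset.sum_congr rfl fun q _ => ?_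
      have : Pi.single q (b q) = b q • (Pi.single q (1 : ℝ) : F → ℝ) := by
        rw [← Pi.single_smul]; simp
      rw [this, map_smul, smul_eq_mul, mul_comm]
    have hlam : ∀ q, 0 ≤ lam q := by
      intro q
      by_contra hneg
      push Not at hneg
      have h0 := hfs b0 (le_refl b0)
      -- going far in the direction of the `q`-th coordinate would make `f` too small
      set t := (f b0 - s) / (-lam q) with ht
      have ht0 : 0 ≤ t := div_nonneg (by linarith) (by linarith)
      have h1 := hfs (b0 + t • Pi.single q 1) (by
        have : (0 : F → ℝ) ≤ Pi.single q 1 := Pi.single_nonneg.mpr zero_le_one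
        exact le_add_of_nonneg_right (smul_nonneg ht0 this))
      rw [map_add, map_smul, smul_eq_mul] at h1
      have h2 : t * f (Pi.single q 1) = -(f b0 - s) := by
        change t * lam q = _
        rw [ht]
        field_simp [hneg.ne]
      linarith
    let e := (Fintype.equivFin F).symm
    obtain ⟨p, hp, hle⟩ := h _ (fun j => (e j).1) (lam ∘ e) fun j => hlam _
    have k1 := hfr (Φ p) ⟨p, hp, rfl⟩
    have k2 := hfs b0 (le_refl b0)
    rw [hf, ← e.sum_comp] at k1 k2
    have k3 : ∑ j, lam (e j) * b0 (e j) ≤ ∑ j, lam (e j) * Φ p (e j) := hle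
    linarith
  obtain ⟨p, hp, hq⟩ := main
  simp only [Set.mem_iInter] at hq
  exact ⟨p, hp, hq⟩

/-- The version of `exists_mem_of_weights` for pairs of unknowns. -/
theorem exists_pair_of_weights {V ι : Type*} [NormedAddCommGroup V] [NormedSpace ℝ V]
    {K : Set V} (hKc : IsCompact K) (hKconv : Convex ℝ K) (ev ev' : ι → (V →L[ℝ] ℝ)) (b : ι → ℝ)
    (c : ℝ) (h : ∀ (m : ℕ) (e : Fin m → ι) (lam : Fin m → ℝ), (∀ j, 0 ≤ lam j) →
      ∃ P ∈ K, ∃ Q ∈ K, ∑ j, lam j * b (e j) ≤ ∑ j, lam j * (c * ev (e j) P + c * ev' (e j) Q)) :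
    ∃ P ∈ K, ∃ Q ∈ K, ∀ i, b i ≤ c * ev i P + c * ev' i Q := by
  obtain ⟨p, hp, hpq⟩ := exists_mem_of_weights (hKc.prod hKc) (hKconv.prod hKconv)
    (fun i => c • (ev i).comp (ContinuousLinearMap.fst ℝ V V) +
      c • (ev' i).comp (ContinuousLinearMap.snd ℝ V V)) b (fun m e lam hlam => by
        obtain ⟨P, hP, Q, hQ, hle⟩ := h m e lam hlam
        exact ⟨(P, Q), ⟨hP, hQ⟩, hle⟩)
  exact ⟨p.1, hp.1, p.2, hp.2, hpq⟩

section Pietsch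
variable {X : Type*} [NormedAddCommGroup X] [NormedSpace ℝ X]

/-- The rank one symmetric form `ξ ⊗ ξ`. -/
noncomputable def sqForm (ξ : X →L[ℝ] ℝ) : X →L[ℝ] (X →L[ℝ] ℝ) := ξ.smulRight ξ

theorem sqForm_apply (ξ : X →L[ℝ] ℝ) (x y : X) : sqForm ξ x y = ξ x * ξ y := by simp [sqForm]

/-- Evaluation of a form at `(x, x)`. -/
noncomputable def diagEval (x : X) : (X →L[ℝ] (X →L[ℝ] ℝ)) →L[ℝ] ℝ :=
  (ContinuousLinearMap.apply ℝ ℝ x).comp (ContinuousLinearMap.apply ℝ (X →L[ℝ] ℝ) x)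

theorem diagEval_apply (x : X) (P : X →L[ℝ] (X →L[ℝ] ℝ)) : diagEval x P = P x x := rfl

/-- The convex hull of the squares `ξ ⊗ ξ`, `‖ξ‖ ≤ 1`. -/
def sqBody (X : Type*) [NormedAddCommGroup X] [NormedSpace ℝ X] :
    Set (X →L[ℝ] (X →L[ℝ] ℝ)) :=
  convexHull ℝ (sqForm '' Metric.closedBall (0 : X →L[ℝ] ℝ) 1)

theorem convex_sqBody : Convex ℝ (sqBody X) := convex_convexHull ℝ _

theorem sqForm_mem_sqBody {ξ : X →L[ℝ] ℝ} (hξ : ‖ξ‖ ≤ 1) : sqForm ξ ∈ sqBody X :=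
  subset_convexHull ℝ (sqForm '' Metric.closedBall (0 : X →L[ℝ] ℝ) 1)
    (Set.mem_image_of_mem _ (by simpa using hξ))

/-- Every form in the convex hull of the squares `ξ ⊗ ξ`, `‖ξ‖ ≤ 1`, is a sum of squares
`∑ a i ⊗ a i` with `∑ ‖a i‖² ≤ 1`. -/
theorem exists_sum_of_mem_convexHull {P : X →L[ℝ] (X →L[ℝ] ℝ)}
    (hP : P ∈ convexHull ℝ (sqForm '' Metric.closedBall (0 : X →L[ℝ] ℝ) 1)) :
    ∃ (m : ℕ) (a : Fin m → (X →L[ℝ] ℝ)), ∑ i, ‖a i‖ ^ 2 ≤ 1 ∧ ∀ x, P x x = ∑ i, a i x ^ 2 := by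
  obtain ⟨m, w, z, hz, hw, hw1, hPe⟩ := exists_fin_of_mem_convexHull (V := X →L[ℝ] (X →L[ℝ] ℝ))
    (s := sqForm '' Metric.closedBall (0 : X →L[ℝ] ℝ) 1) (x := P) (by exact hP)
  choose ξ hξ1 hξ2 using hz
  refine ⟨m, fun j => √(w j) • ξ j, ?_, fun x => ?_⟩
  · rw [← hw1]
    refine Finset.sum_le_sum fun i _ => ?_
    rw [norm_smul, mul_pow, Real.norm_eq_abs, sq_abs, Real.sq_sqrt (hw i)]
    have : ‖ξ i‖ ≤ 1 := by simpa using hξ1 i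
    exact mul_le_of_le_one_right (hw i) (pow_le_one₀ (norm_nonneg _) this)
  · rw [hPe, sum_apply, sum_apply]
    refine Finset.sum_congr rfl fun i _ => ?_
    rw [← hξ2, smul_apply, smul_apply, smul_apply, sqForm_apply, smul_eq_mul, smul_eq_mul,
      mul_pow, Real.sq_sqrt (hw i)]
    ring

variable [FiniteDimensional ℝ X]

/-- The weak `ℓ₂` norm of a finite sequence is attained. -/
theorem exists_max_weak {m : ℕ} (x : Fin m → X) :
    ∃ ξ₀ : X →L[ℝ] ℝ, ‖ξ₀‖ ≤ 1 ∧
      ∀ ξ : X →L[ℝ] ℝ, ∑ j, ξ (x j) ^ 2 ≤ (∑ j, ξ₀ (x j) ^ 2) * ‖ξ‖ ^ 2 := by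
  have : ProperSpace (X →L[ℝ] ℝ) := FiniteDimensional.proper ℝ _
  obtain ⟨ξ₀, h0, h1⟩ := (isCompact_closedBall (0 : X →L[ℝ] ℝ) 1).exists_isMaxOn
    ⟨0, by simp⟩ (f := fun ξ => ∑ j, ξ (x j) ^ 2)
    (by
      apply Continuous.continuousOn
      refine continuous_finsetSum _ fun j _ => ?_
      exact ((ContinuousLinearMap.apply ℝ ℝ (x j)).continuous).pow 2)
  refine ⟨ξ₀, by simpa using h0, fun ξ => ?_⟩
  rcases eq_or_ne ξ 0 with rfl | hξ
  · simp
  have hp : 0 < ‖ξ‖ := norm_pos_iff.mpr hξ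
  have := h1 (show ‖ξ‖⁻¹ • ξ ∈ Metric.closedBall 0 1 by
    simp [norm_smul, hp.ne'])
  simp only [Set.mem_ofPred_eq, smul_apply, smul_eq_mul, mul_pow, ← Finset.mul_sum] at this
  rwa [inv_pow, inv_mul_le_iff₀ (by positivity), mul_comm] at this

theorem isCompact_sqBody : IsCompact (sqBody X) := by
  have : ProperSpace (X →L[ℝ] ℝ) := FiniteDimensional.proper ℝ _
  refine isCompact_convexHull_of_finiteDimensional (V := X →L[ℝ] (X →L[ℝ] ℝ)) ?_
  apply (isCompact_closedBall _ _).image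
  have : (fun ξ : X →L[ℝ] ℝ => sqForm ξ) =
      fun ξ => ContinuousLinearMap.smulRightL ℝ X (X →L[ℝ] ℝ) ξ ξ := by
    ext; simp [sqForm]
  change Continuous fun ξ : X →L[ℝ] ℝ => sqForm ξ
  rw [this]
  fun_prop

/-- The Grothendieck inequality for points carrying non-negative weights, its right hand side
being linearized by the inequality between the arithmetic and the geometric mean. -/
theorem GTBound.exists_weighted {C : ℝ} (hC : 0 ≤ C) (h : GTBound X C)
    (A : X →L[ℝ] (X →L[ℝ] ℝ)) {m : ℕ} (e : Fin m → X × X) (lam : Fin m → ℝ)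
    (hlam : ∀ j, 0 ≤ lam j) :
    ∃ ξ ζ : X →L[ℝ] ℝ, ‖ξ‖ ≤ 1 ∧ ‖ζ‖ ≤ 1 ∧
      ∑ j, lam j * (2 * A (e j).1 (e j).2) ≤
        ∑ j, lam j * (C * ‖A‖ * ξ (e j).1 ^ 2 + C * ‖A‖ * ζ (e j).2 ^ 2) := by
  set c := C * ‖A‖ with hc
  have hc0 : 0 ≤ c := by positivity
  let x : Fin m → X := fun j => √(lam j) • (e j).1
  let y : Fin m → X := fun j => √(lam j) • (e j).2
  obtain ⟨ξ, hξ, hξ2⟩ := exists_max_weak x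
  obtain ⟨ζ, hζ, hζ2⟩ := exists_max_weak y
  refine ⟨ξ, ζ, hξ, hζ, ?_⟩
  set wx := √(∑ j, ξ (x j) ^ 2) with hwx
  set wy := √(∑ j, ζ (y j) ^ 2) with hwy
  have ewx : wx ^ 2 = ∑ j, ξ (x j) ^ 2 := Real.sq_sqrt (by positivity)
  have ewy : wy ^ 2 = ∑ j, ζ (y j) ^ 2 := Real.sq_sqrt (by positivity)
  have hG := h.sum_le hC A x y (Real.sqrt_nonneg _) (Real.sqrt_nonneg _)
    (by rw [← ewx] at hξ2; exact hξ2) (by rw [← ewy] at hζ2; exact hζ2)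
  rw [← hwx, ← hwy, ← hc] at hG
  have e1 : ∑ j, lam j * (2 * A (e j).1 (e j).2) = 2 * ∑ j, A (x j) (y j) := by
    rw [Finset.mul_sum]
    refine Finset.sum_congr rfl fun j _ => ?_
    simp only [x, y, map_smul, smul_apply, smul_eq_mul]
    rw [← mul_assoc (√_), Real.mul_self_sqrt (hlam _)]
    ring
  have e2 : ∑ j, lam j * (c * ξ (e j).1 ^ 2 + c * ζ (e j).2 ^ 2) =
      c * (wx ^ 2 + wy ^ 2) := by
    rw [ewx, ewy, ← Finset.sum_add_distrib, Finset.mul_sum]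
    refine Finset.sum_congr rfl fun j _ => ?_
    simp only [x, y, map_smul, smul_eq_mul, mul_pow, Real.sq_sqrt (hlam _)]
    ring
  rw [e1]
  refine le_trans ?_ e2.ge
  nlinarith [mul_nonneg hc0 (sq_nonneg (wx - wy))]

set_option maxHeartbeats 2000000 in
/-- Domination of `A` by two sums of squares: the minimax principle turns the weighted
inequalities into a single pair of forms, taken from the compact convex set `sqBody X`. -/
theorem GTBound.exists_domination {C : ℝ} (hC : 0 ≤ C) (h : GTBound X C)
    (A : X →L[ℝ] (X →L[ℝ] ℝ)) :
    ∃ (m : ℕ) (a : Fin m → (X →L[ℝ] ℝ)) (m' : ℕ) (b : Fin m' → (X →L[ℝ] ℝ)),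
      ∑ i, ‖a i‖ ^ 2 ≤ 1 ∧ ∑ i, ‖b i‖ ^ 2 ≤ 1 ∧
      ∀ x y, 2 * A x y ≤ C * ‖A‖ * (∑ i, a i x ^ 2 + ∑ i, b i y ^ 2) := by
  obtain ⟨P, hP, Q, hQ, hPQ⟩ := exists_pair_of_weights (V := X →L[ℝ] (X →L[ℝ] ℝ)) (K := sqBody X)
    isCompact_sqBody convex_sqBody (fun q : X × X => diagEval q.1) (fun q => diagEval q.2)
    (fun q => 2 * A q.1 q.2) (C * ‖A‖) (fun m e lam hlam => by
      obtain ⟨ξ, ζ, hξ, hζ, hle⟩ := h.exists_weighted hC A e lam hlam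
      refine ⟨sqForm ξ, sqForm_mem_sqBody hξ, sqForm ζ, sqForm_mem_sqBody hζ, ?_⟩
      simpa only [diagEval_apply, sqForm_apply, ← sq] using hle)
  obtain ⟨m, a, ha, haP⟩ := exists_sum_of_mem_convexHull hP
  obtain ⟨m', b, hb, hbQ⟩ := exists_sum_of_mem_convexHull hQ
  refine ⟨m, a, m', b, ha, hb, fun x y => ?_⟩
  rw [← haP, ← hbQ, mul_add]
  exact hPQ (x, y)

end Pietsch

/-! ### Factorization of the operators into the dual -/

theorem norm_le_of_eval_eq {X : Type*} [NormedAddCommGroup X] [NormedSpace ℝ X]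
    {Λ : (X →L[ℝ] ℝ) →L[ℝ] ℝ} {y : X} (h : ∀ ξ : X →L[ℝ] ℝ, Λ ξ = ξ y) :
    ‖y‖ ≤ ‖Λ‖ := by
  obtain ⟨g, hg, hgy⟩ := exists_dual_vector'' ℝ y
  have h1 : Λ g = ‖y‖ := (h g).trans hgy
  rw [← h1]
  exact (le_abs_self _).trans ((Λ.le_opNorm g).trans (mul_le_of_le_one_right (norm_nonneg _) hg))

section Factor
variable {X : Type*} [NormedAddCommGroup X] [NormedSpace ℝ X] [FiniteDimensional ℝ X]

/-- Finite dimensional spaces are reflexive. -/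
theorem exists_eq_eval (Λ : (X →L[ℝ] ℝ) →L[ℝ] ℝ) : ∃ y : X, ∀ ξ : X →L[ℝ] ℝ, Λ ξ = ξ y := by
  refine ⟨∑ k, Λ (coordCLM X k) • Module.finBasis ℝ X k, fun ξ => ?_⟩
  conv_lhs => rw [← sum_apply_basis_smul_coordCLM ξ]
  simp [mul_comm]

/-- The choice `t = q / p` in the hypothesis, with a limiting argument if `p` or `q` vanishes. -/
theorem le_mul_of_forall_scale {s c p q : ℝ} (hc : 0 ≤ c) (hp : 0 ≤ p) (hq : 0 ≤ q)
    (h : ∀ t > 0, 2 * (t * s) ≤ c * (t ^ 2 * p ^ 2 + q ^ 2)) : s ≤ c * p * q := by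
  rcases hp.eq_or_lt with rfl | hp
  · by_contra hs
    simp only [mul_zero, zero_mul, not_le] at hs
    have := h ((c * q ^ 2 + 1) / s) (by positivity)
    rw [div_mul_cancel₀ _ hs.ne'] at this
    have := mul_nonneg hc (sq_nonneg q)
    nlinarith
  rcases hq.eq_or_lt with rfl | hq
  · by_contra hs
    simp only [mul_zero, not_le] at hs
    have h0 : 0 < c * p ^ 2 + 1 := by positivity
    have h1 := h (s / (c * p ^ 2 + 1)) (by positivity)
    have h2 : c * ((s / (c * p ^ 2 + 1)) ^ 2 * p ^ 2 + 0 ^ 2) =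
        (s / (c * p ^ 2 + 1) * s) * (c * p ^ 2 / (c * p ^ 2 + 1)) := by field_simp; ring
    rw [h2] at h1
    have h3 : c * p ^ 2 / (c * p ^ 2 + 1) ≤ 1 := by rw [div_le_one h0]; linarith
    have h4 : 0 < s / (c * p ^ 2 + 1) * s := by positivity
    nlinarith
  · have h1 := h (q / p) (by positivity)
    have h2 : c * ((q / p) ^ 2 * p ^ 2 + q ^ 2) = 2 * (q / p * (c * p * q)) := by
      field_simp; ring
    rw [h2] at h1
    have h3 : 0 < q / p := by positivity
    nlinarith

theorem sum_sq_apply_le {Z : Type*} [NormedAddCommGroup Z] [NormedSpace ℝ Z] {m : ℕ}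
    {b : Fin m → (Z →L[ℝ] ℝ)} (hb : ∑ i, ‖b i‖ ^ 2 ≤ 1) (y : Z) : ∑ i, b i y ^ 2 ≤ ‖y‖ ^ 2 := by
  calc ∑ i, b i y ^ 2 ≤ ∑ i, ‖b i‖ ^ 2 * ‖y‖ ^ 2 := by
        refine Finset.sum_le_sum fun i _ => ?_
        rw [← mul_pow, ← sq_abs]
        have := (b i).le_opNorm y
        rw [Real.norm_eq_abs] at this
        gcongr
    _ ≤ 1 * ‖y‖ ^ 2 := by rw [← Finset.sum_mul]; gcongr
    _ = _ := one_mul _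

/-- A map dominated by a sum of squares `∑ b i ⊗ b i` with `∑ ‖b i‖² ≤ 1` is 2-summing. -/
theorem psum_two_of_dominated {Z Y : Type*} [NormedAddCommGroup Z] [NormedSpace ℝ Z]
    [NormedAddCommGroup Y] [NormedSpace ℝ Y] {m : ℕ}
    {b : Fin m → (Z →L[ℝ] ℝ)} (hb : ∑ i, ‖b i‖ ^ 2 ≤ 1) {c : ℝ} (hc : 0 ≤ c) (u : Z →L[ℝ] Y)
    (hu : ∀ z, ‖u z‖ ^ 2 ≤ c ^ 2 * ∑ i, b i z ^ 2) : PSummingBound 2 c u := by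
  rw [psum_two_iff hc]
  intro n x w hw hx
  calc ∑ j, ‖u (x j)‖ ^ 2 ≤ ∑ j, c ^ 2 * ∑ i, b i (x j) ^ 2 := Finset.sum_le_sum fun j _ => hu _
    _ = c ^ 2 * ∑ i, ∑ j, b i (x j) ^ 2 := by rw [← Finset.mul_sum, Finset.sum_comm]
    _ ≤ c ^ 2 * ∑ i, w ^ 2 * ‖b i‖ ^ 2 := by gcongr with i; exact hx (b i)
    _ ≤ c ^ 2 * (w ^ 2 * 1) := by rw [← Finset.mul_sum]; gcongr
    _ = _ := by ring

/-- Under the Grothendieck inequality every `A : X → X*` is a product `ψ φ` through `ℓ₂` in which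
both `φ` and the transpose of `ψ` are 2-summing. -/
theorem GTBound.exists_factorization {C : ℝ} (hC : 0 ≤ C) (h : GTBound X C)
    (A : X →L[ℝ] (X →L[ℝ] ℝ)) :
    ∃ (φ : X →L[ℝ] ellTwo) (ψ : ellTwo →L[ℝ] (X →L[ℝ] ℝ)), A = ψ.comp φ ∧ ‖φ‖ ≤ 1 ∧
      ‖ψ‖ ≤ C * ‖A‖ ∧ PSummingBound 2 1 φ ∧ PSummingBound 2 (C * ‖A‖) (transposeMap ψ) := by
  obtain ⟨m, a, m', b, ha, hb, hab⟩ := h.exists_domination hC A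
  set c := C * ‖A‖ with hc
  have hc0 : 0 ≤ c := by positivity
  let φ : X →L[ℝ] ellTwo := emb a
  have hdom : ∀ x y, A x y ≤ c * ‖φ x‖ * √(∑ i, b i y ^ 2) := by
    intro x y
    apply le_mul_of_forall_scale hc0 (norm_nonneg _) (Real.sqrt_nonneg _)
    intro t _
    have := hab (t • x) y
    rw [Real.sq_sqrt (by positivity), norm_emb_sq, Finset.mul_sum]
    simpa [mul_pow] using this
  -- a linear section of `φ` over its range defines `ψ` there
  let S : Submodule ℝ ellTwo := LinearMap.range φ.toLinearMap
  obtain ⟨s, hs⟩ := φ.toLinearMap.rangeRestrict.exists_rightInverse_of_surjective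
    (LinearMap.range_rangeRestrict _)
  have hs' : ∀ z : S, φ (s z) = z := fun z => congrArg Subtype.val (LinearMap.congr_fun hs z)
  let ψ : ellTwo →L[ℝ] (X →L[ℝ] ℝ) :=
    (A.comp (LinearMap.toContinuousLinearMap s)).comp S.orthogonalProjectionOnto
  have hψ : ∀ z y, ψ z y = A (s (S.orthogonalProjectionOnto z)) y := fun z y => rfl
  have hψ1 : ∀ z y, ψ z y ≤ c * ‖z‖ * √(∑ i, b i y ^ 2) := by
    intro z y
    rw [hψ]
    refine (hdom _ _).trans ?_
    rw [hs']
    gcongr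
    exact S.norm_orthogonalProjectionOnto_apply_le z
  have hψ2 : ∀ z y, |ψ z y| ≤ c * ‖z‖ * √(∑ i, b i y ^ 2) := by
    intro z y
    rw [abs_le]
    have := hψ1 z (-y)
    simp only [map_neg, neg_sq] at this
    exact ⟨by linarith, hψ1 z y⟩
  refine ⟨φ, ψ, ?_, ?_, ?_, ?_, ?_⟩
  · have h0 : ∀ x y, φ x = 0 → A x y ≤ 0 := fun x y hx => by simpa [hx] using hdom x y
    ext x y
    let z : S := ⟨φ x, ⟨x, rfl⟩⟩
    have hz : S.orthogonalProjectionOnto (φ x) = z :=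
      S.orthogonalProjectionOnto_mem_subspace_eq_self z
    rw [ContinuousLinearMap.comp_apply, hψ, hz]
    have e1 : φ (s z - x) = 0 := by rw [map_sub, hs', sub_self]
    have h1 := h0 _ y e1
    have h2 := h0 _ (-y) e1
    simp only [map_sub, map_neg, sub_apply] at h1 h2
    linarith
  · refine norm_emb_le a 1 zero_le_one fun y => ?_
    rw [one_pow, one_mul]
    exact sum_sq_apply_le ha y
  · refine ContinuousLinearMap.opNorm_le_bound _ hc0 fun z => ?_
    refine ContinuousLinearMap.opNorm_le_bound _ (by positivity) fun y => ?_
    refine (hψ2 z y).trans ?_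
    gcongr
    rw [Real.sqrt_le_left (norm_nonneg _)]
    exact sum_sq_apply_le hb y
  · refine psum_two_of_dominated ha zero_le_one φ fun z => ?_
    rw [norm_emb_sq, one_pow, one_mul]
  · refine psum_two_of_dominated (b := fun i => ContinuousLinearMap.apply ℝ ℝ (b i)) ?_ hc0 _ ?_
    · refine le_trans (Finset.sum_le_sum fun i _ => ?_) hb
      gcongr
      refine ContinuousLinearMap.opNorm_le_bound _ (norm_nonneg _) fun Λ => ?_
      rw [ContinuousLinearMap.apply_apply, mul_comm]
      exact Λ.le_opNorm _
    · intro Λ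
      obtain ⟨y, hy⟩ := exists_eq_eval Λ
      have h1 : ‖transposeMap ψ Λ‖ ≤ c * √(∑ i, b i y ^ 2) := by
        refine ContinuousLinearMap.opNorm_le_bound _ (by positivity) fun z => ?_
        change ‖Λ (ψ z)‖ ≤ _
        rw [hy, Real.norm_eq_abs]
        exact (hψ2 z y).trans_eq (by ring)
      calc ‖transposeMap ψ Λ‖ ^ 2 ≤ (c * √(∑ i, b i y ^ 2)) ^ 2 := by gcongr
        _ = c ^ 2 * ∑ i, b i y ^ 2 := by rw [mul_pow, Real.sq_sqrt (by positivity)]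
        _ = _ := by simp [hy]

end Factor

/-! ### From summing operators back to the Grothendieck inequality -/

section Converse
variable {X : Type*} [NormedAddCommGroup X] [NormedSpace ℝ X] [FiniteDimensional ℝ X]

/-- A functional dominated by the projective norm that norms `v`, by Hahn-Banach. -/
theorem exists_norming_projNorm {F : Type*} [NormedAddCommGroup F] [NormedSpace ℝ F]
    (v : X →L[ℝ] F) :
    ∃ g : (X →L[ℝ] F) →ₗ[ℝ] ℝ, g v = projNorm v ∧ ∀ w, g w ≤ projNorm w := by
  rcases eq_or_ne v 0 with rfl | hv
  · exact ⟨0, by simp [projNorm_zero], fun w => by simpa using projNorm_nonneg w⟩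
  obtain ⟨g, hg1, hg2⟩ := exists_extension_of_le_sublinear
    (LinearPMap.mkSpanSingleton v (projNorm v) hv) projNorm
    (fun c hc x => projNorm_smul x hc) projNorm_add_le (by
      rintro ⟨x, hx⟩
      obtain ⟨t, rfl⟩ := Submodule.mem_span_singleton.mp hx
      refine (LinearPMap.mkSpanSingleton'_apply v (projNorm v) _ t hx).trans_le ?_
      rw [smul_eq_mul]
      rcases le_or_gt t 0 with ht | ht
      · exact (mul_nonpos_of_nonpos_of_nonneg ht (projNorm_nonneg v)).trans (projNorm_nonneg _)
      · exact (projNorm_smul v ht).ge)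
  refine ⟨g, ?_, hg2⟩
  exact (hg1 ⟨v, Submodule.mem_span_singleton_self v⟩).trans
    (LinearPMap.mkSpanSingleton_apply ℝ ℝ hv (projNorm v))

/-- The dual of `X* ⊗̂ ℓ₂` is the space of operators from `X*` to `ℓ₂`, so the projective norm of `v` is
attained in the trace pairing with one of these, of norm at most one. -/
theorem exists_tracePair_eq (v : X →L[ℝ] ellTwo) :
    ∃ G : (X →L[ℝ] ℝ) →L[ℝ] ellTwo, ‖G‖ ≤ 1 ∧ tracePair G v = projNorm v := by
  obtain ⟨g, hgv, hg⟩ := exists_norming_projNorm v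
  have hrank : ∀ (η : X →L[ℝ] ℝ) (y : ellTwo), g (η.smulRight y) ≤ ‖η‖ * ‖y‖ := by
    intro η y
    refine (hg _).trans ?_
    simpa using projNorm_le (η.smulRight y) (k := 1) (fun _ => η) (fun _ => y) (by simp)
  have hex : ∀ η : X →L[ℝ] ℝ, ∃ z : ellTwo, ‖z‖ ≤ ‖η‖ ∧
      ∀ y, inner ℝ z y = g (η.smulRight y) := by
    intro η
    let L : ellTwo →ₗ[ℝ] ℝ :=
      { toFun := fun y => g (η.smulRight y)
        map_add' := fun y y' => by
          rw [← map_add]; congr 1; ext1 x; simp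
        map_smul' := fun c y => by
          rw [RingHom.id_apply, ← map_smul]; congr 1; ext1 x
          simp only [ContinuousLinearMap.smulRight_apply, smul_apply, smul_comm c] }
    have hL : ∀ y, ‖L y‖ ≤ ‖η‖ * ‖y‖ := by
      intro y
      rw [Real.norm_eq_abs, abs_le]
      have h1 := hrank η (-y)
      have h2 : g (η.smulRight (-y)) = - L y := by rw [← map_neg]; rfl
      rw [h2, norm_neg] at h1
      exact ⟨by linarith, hrank η y⟩
    refine ⟨(InnerProductSpace.toDual ℝ ellTwo).symm (L.mkContinuous _ hL), ?_, fun y => ?_⟩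
    · rw [LinearIsometryEquiv.norm_map]
      exact L.mkContinuous_norm_le (norm_nonneg _) hL
    · rw [InnerProductSpace.toDual_symm_apply]
      rfl
  choose z hz1 hz2 using hex
  let G : (X →L[ℝ] ℝ) →L[ℝ] ellTwo := LinearMap.mkContinuous
    { toFun := z
      map_add' := fun η η' => by
        refine ext_inner_right ℝ fun y => ?_
        rw [inner_add_left, hz2, hz2, hz2, ← map_add]
        congr 1; ext1 x; simp [add_smul]
      map_smul' := fun c η => by
        refine ext_inner_right ℝ fun y => ?_
        rw [RingHom.id_apply, inner_smul_left, hz2, hz2, conj_trivial, ← smul_eq_mul, ← map_smul]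
        congr 1; ext1 x; simp [mul_smul] } 1 (fun η => by simpa using hz1 η)
  refine ⟨G, LinearMap.mkContinuous_norm_le _ zero_le_one _, ?_⟩
  rw [← hgv]
  have hv : v = ∑ k, (coordCLM X k).smulRight (v (Module.finBasis ℝ X k)) := by
    ext1 x
    conv_lhs => rw [← sum_coordCLM x]
    simp
  conv_rhs => rw [hv, map_sum]
  exact Finset.sum_congr rfl fun k _ => hz2 _ _

/-- The trace of `G` against `u ∘ Aᵀ` is controlled by a factorization of `Aᵀ` through a Hilbert space:
an orthonormal basis of the range of the first factor gives two weakly `ℓ₂` sequences, in `X*`, to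
which the `2`-summing operators `G` and `u` apply. -/
theorem gtBound_of_summing {K₁ K₂ : ℝ} (hK₁ : 0 ≤ K₁)
    (hB : ∀ B : (X →L[ℝ] ℝ) →L[ℝ] ellTwo, PSummingBound 2 (K₁ * ‖B‖) B)
    (hA : ∀ A : X →L[ℝ] (X →L[ℝ] ℝ), Gamma2Bound (K₂ * ‖A‖) A) : GTBound X (K₁ ^ 2 * K₂) := by
  intro A u
  have main : ∀ ε > 0, projNorm (u.comp A.flip) ≤ K₁ ^ 2 * ‖u‖ * (K₂ * ‖A‖ + ε) := by
    intro ε hε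
    obtain ⟨G, hG, hGv⟩ := exists_tracePair_eq (u.comp A.flip)
    obtain ⟨ι, β, α, hαβ, hle⟩ := hA A.flip ε hε
    rw [ContinuousLinearMap.opNorm_flip] at hle
    let S : Submodule ℝ (lp (fun _ : ι => ℝ) 2) := LinearMap.range β.toLinearMap
    let h := stdOrthonormalBasis ℝ S
    let h' : Fin (Module.finrank ℝ S) → lp (fun _ : ι => ℝ) 2 := fun l => h l
    have hon : Orthonormal ℝ h' := h.orthonormal.comp_linearIsometry S.subtypeₗᵢ
    let η : Fin (Module.finrank ℝ S) → (X →L[ℝ] ℝ) := fun l => (innerSL ℝ (h' l)).comp β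
    have hβ : ∀ x, β x = ∑ l, η l x • h' l := by
      intro x
      have := h.sum_repr' ⟨β x, ⟨x, rfl⟩⟩
      have := congrArg Subtype.val this
      simpa [η, h'] using this.symm
    have hv : ∀ x, u.comp A.flip x = ∑ l, η l x • u (α (h' l)) := by
      intro x
      rw [hαβ]
      change u (α (β x)) = _
      conv_lhs => rw [hβ]
      simp
    rw [← hGv, tracePair_eq G _ η _ hv]
    have hsum : ∀ (z : lp (fun _ : ι => ℝ) 2), ∑ l, inner ℝ (h' l) z ^ 2 ≤ ‖z‖ ^ 2 := by
      intro z
      simpa using hon.sum_inner_products_le z (s := Finset.univ)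
    have b1 : ∑ l, ‖G (η l)‖ ^ 2 ≤ (K₁ * ‖G‖) ^ 2 * ‖β‖ ^ 2 := by
      refine (psum_two_iff (by positivity) G).mp (hB G) _ η ‖β‖ (norm_nonneg _) fun Λ => ?_
      obtain ⟨y, hy⟩ := exists_eq_eval Λ
      simp only [hy]
      calc ∑ l, η l y ^ 2 ≤ ‖β y‖ ^ 2 := hsum (β y)
        _ ≤ (‖β‖ * ‖y‖) ^ 2 := by gcongr; exact β.le_opNorm y
        _ ≤ (‖β‖ * ‖Λ‖) ^ 2 := by gcongr; exact norm_le_of_eval_eq hy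
        _ = _ := mul_pow _ _ _
    have b2 : ∑ l, ‖u (α (h' l))‖ ^ 2 ≤ (K₁ * ‖u‖) ^ 2 * ‖α‖ ^ 2 := by
      refine (psum_two_iff (by positivity) u).mp (hB u) _ (fun l => α (h' l)) ‖α‖
        (norm_nonneg _) fun Λ => ?_
      let z := (InnerProductSpace.toDual ℝ (lp (fun _ : ι => ℝ) 2)).symm (Λ.comp α)
      have hz : ∀ l, Λ (α (h' l)) = inner ℝ (h' l) z := by
        intro l
        rw [real_inner_comm, InnerProductSpace.toDual_symm_apply]
        rfl
      simp only [hz]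
      refine (hsum z).trans ?_
      rw [← mul_pow, mul_comm ‖α‖, LinearIsometryEquiv.norm_map]
      gcongr
      exact Λ.opNorm_comp_le α
    calc ∑ l, inner ℝ (G (η l)) (u (α (h' l))) ≤ ∑ l, ‖G (η l)‖ * ‖u (α (h' l))‖ :=
          Finset.sum_le_sum fun l _ => real_inner_le_norm _ _
      _ ≤ √(∑ l, ‖G (η l)‖ ^ 2) * √(∑ l, ‖u (α (h' l))‖ ^ 2) :=
          Real.sum_mul_le_sqrt_mul_sqrt _ _ _
      _ ≤ √((K₁ * ‖G‖ * ‖β‖) ^ 2) * √((K₁ * ‖u‖ * ‖α‖) ^ 2) := by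
          rw [mul_pow _ ‖β‖, mul_pow _ ‖α‖]; gcongr
      _ = K₁ ^ 2 * ‖u‖ * (‖G‖ * (‖α‖ * ‖β‖)) := by
          rw [Real.sqrt_sq (by positivity), Real.sqrt_sq (by positivity)]; ring
      _ ≤ K₁ ^ 2 * ‖u‖ * (1 * (‖α‖ * ‖β‖)) := by gcongr
      _ ≤ _ := by rw [one_mul]; gcongr
  refine le_of_forall_pos_le_add fun δ hδ => ?_
  refine (main (δ / (K₁ ^ 2 * ‖u‖ + 1)) (by positivity)).trans ?_
  have h2 : K₁ ^ 2 * ‖u‖ * (δ / (K₁ ^ 2 * ‖u‖ + 1)) ≤ δ := by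
    rw [mul_div_assoc', div_le_iff₀ (by positivity)]
    nlinarith
  rw [mul_add]
  linarith

end Converse

/-! ### Gaussian random operators -/

section GaussianOperator
open MeasureTheory ProbabilityTheory

theorem lintegral_exp_sq_div_four :
    ∫⁻ x, ENNReal.ofReal (Real.exp (x ^ 2 / 4)) ∂(gaussianReal 0 1) = ENNReal.ofReal (√2) := by
  rw [gaussianReal_of_var_ne_zero _ one_ne_zero,
    lintegral_withDensity_eq_lintegral_mul _ (by fun_prop) (by fun_prop)]
  -- the density of `N(0,1)` times `exp (x² / 4)` is `√2` times the density of `N(0,2)`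
  have h : ∀ x : ℝ, (gaussianPDF 0 1 * fun x => ENNReal.ofReal (Real.exp (x ^ 2 / 4))) x =
      ENNReal.ofReal (√2) * ENNReal.ofReal (gaussianPDFReal 0 2 x) := by
    intro x
    rw [Pi.mul_apply, gaussianPDF, ← ENNReal.ofReal_mul (gaussianPDFReal_nonneg _ _ _),
      ← ENNReal.ofReal_mul (by positivity)]
    congr 1
    rw [gaussianPDFReal, gaussianPDFReal, mul_assoc, ← Real.exp_add]
    have e1 : √(2 * Real.pi * (2 : NNReal)) = √2 * √(2 * Real.pi * (1 : NNReal)) := by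
      rw [← Real.sqrt_mul (by norm_num)]
      congr 1
      push_cast; ring
    have e2 : -(x - 0) ^ 2 / (2 * ((1 : NNReal) : ℝ)) + x ^ 2 / 4 =
        -(x - 0) ^ 2 / (2 * ((2 : NNReal) : ℝ)) := by
      push_cast; ring
    rw [e1, e2, mul_inv, ← mul_assoc (√2), ← mul_assoc (√2), mul_inv_cancel₀ (by positivity),
      one_mul]
  simp_rw [h]
  rw [lintegral_const_mul _ (by fun_prop), lintegral_gaussianPDFReal_eq_one _ two_ne_zero, mul_one]

theorem lintegral_exp_norm_sq_div_four (k : ℕ) :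
    ∫⁻ s, ENNReal.ofReal (Real.exp (‖s‖ ^ 2 / 4)) ∂(stdGaussian (EuclideanSpace ℝ (Fin k)))
      = ENNReal.ofReal (√2) ^ k := by
  rw [← map_pi_eq_stdGaussian, lintegral_map (by fun_prop) (by fun_prop)]
  have h : ∀ x : Fin k → ℝ, ENNReal.ofReal (Real.exp (‖WithLp.toLp 2 x‖ ^ 2 / 4)) =
      ∏ i, ENNReal.ofReal (Real.exp (x i ^ 2 / 4)) := by
    intro x
    rw [EuclideanSpace.real_norm_sq_eq, Finset.sum_div, Real.exp_sum,
      ENNReal.ofReal_prod_of_nonneg (fun i _ => (Real.exp_pos _).le)]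
  simp_rw [h]
  rw [lintegral_prod_eq_prod_lintegral_of_indepFun Finset.univ
    (fun (i : Fin k) (x : Fin k → ℝ) => ENNReal.ofReal (Real.exp (x i ^ 2 / 4)))
    (iIndepFun_pi (μ := fun _ : Fin k => gaussianReal 0 1)
      (X := fun _ t => ENNReal.ofReal (Real.exp (t ^ 2 / 4))) fun _ => by fun_prop)
    (fun i => by fun_prop)]
  have h2 : ∀ i : Fin k, ∫⁻ x : Fin k → ℝ, ENNReal.ofReal (Real.exp (x i ^ 2 / 4))
      ∂(Measure.pi fun _ => gaussianReal 0 1) = ENNReal.ofReal (√2) := by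
    intro i
    rw [← lintegral_exp_sq_div_four,
      ← (measurePreserving_eval (fun _ : Fin k => gaussianReal 0 1) i).lintegral_comp (by fun_prop)]
  simp [h2]

variable {k d : ℕ}

/-- The `j`-th column of a matrix. -/
noncomputable def matCol (j : Fin k) :
    EuclideanSpace ℝ (Fin k × Fin d) →L[ℝ] EuclideanSpace ℝ (Fin d) :=
  LinearMap.toContinuousLinearMap
    { toFun := fun g => WithLp.toLp 2 fun a => g (j, a)
      map_add' := fun _ _ => rfl
      map_smul' := fun _ _ => rfl }

theorem matCol_apply (j : Fin k) (g : EuclideanSpace ℝ (Fin k × Fin d)) (a : Fin d) :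
    matCol j g a = g (j, a) := rfl

/-- The linear combination with coefficients `s` of the columns of a matrix. -/
noncomputable def matComb (s : EuclideanSpace ℝ (Fin k)) :
    EuclideanSpace ℝ (Fin k × Fin d) →L[ℝ] EuclideanSpace ℝ (Fin d) :=
  ∑ j, s j • matCol j

theorem matComb_apply (s : EuclideanSpace ℝ (Fin k)) (g : EuclideanSpace ℝ (Fin k × Fin d)) :
    matComb s g = ∑ j, s j • matCol j g := by
  simp [matComb]

/-- A linear combination of independent standard Gaussian columns is distributed as a multiple of
one of them. -/
theorem map_matComb (s : EuclideanSpace ℝ (Fin k)) :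
    (stdGaussian (EuclideanSpace ℝ (Fin k × Fin d))).map (matComb s) =
      (stdGaussian (EuclideanSpace ℝ (Fin d))).map (fun x => ‖s‖ • x) := by
  refine std_map_eq_smul _ _ (fun t => WithLp.toLp 2 fun p => s p.1 * t p.2) (fun t x => ?_)
    fun t => ?_
  · rw [matComb_apply, sum_inner]
    simp only [inner_smul_left, PiLp.inner_apply, matCol_apply, Fintype.sum_prod_type]
    refine Finset.sum_congr rfl fun j _ => ?_
    rw [Finset.mul_sum]
    refine Finset.sum_congr rfl fun a _ => ?_
    simp
    ring
  · simp only [EuclideanSpace.real_norm_sq_eq, Fintype.sum_prod_type, mul_pow, Finset.sum_mul_sum]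

theorem lintegral_matComb (s : EuclideanSpace ℝ (Fin k)) {f : EuclideanSpace ℝ (Fin d) → ℝ≥0∞}
    (hf : Measurable f) :
    ∫⁻ g, f (matComb s g) ∂(stdGaussian (EuclideanSpace ℝ (Fin k × Fin d))) =
      ∫⁻ x, f (‖s‖ • x) ∂(stdGaussian (EuclideanSpace ℝ (Fin d))) := by
  rw [← lintegral_map hf (by fun_prop), map_matComb, lintegral_map hf (by fun_prop)]

theorem integral_matComb (s : EuclideanSpace ℝ (Fin k)) {f : EuclideanSpace ℝ (Fin d) → ℝ}
    (hf : Measurable f) :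
    ∫ g, f (matComb s g) ∂(stdGaussian (EuclideanSpace ℝ (Fin k × Fin d))) =
      ∫ x, f (‖s‖ • x) ∂(stdGaussian (EuclideanSpace ℝ (Fin d))) := by
  rw [← integral_map (by fun_prop) (by fun_prop), map_matComb,
    integral_map (by fun_prop) (by fun_prop)]

/-- A matrix as an operator between Euclidean spaces. -/
noncomputable def matOp : EuclideanSpace ℝ (Fin k × Fin d) →L[ℝ]
    (EuclideanSpace ℝ (Fin k) →L[ℝ] EuclideanSpace ℝ (Fin d)) :=
  ∑ j, (ContinuousLinearMap.smulRightL ℝ (EuclideanSpace ℝ (Fin k)) (EuclideanSpace ℝ (Fin d))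
    (EuclideanSpace.proj j)).comp (matCol j)

theorem matOp_apply (g : EuclideanSpace ℝ (Fin k × Fin d)) (s : EuclideanSpace ℝ (Fin k)) :
    matOp g s = matComb s g := by
  simp [matOp, matComb_apply]

end GaussianOperator

/-! ### Hilbert space valued operators on the dual are absolutely summing -/

section GaussianSummation
open MeasureTheory ProbabilityTheory

variable {X : Type*} [NormedAddCommGroup X] [NormedSpace ℝ X] {k d : ℕ}

/-- The norm of an operator into a finite dimensional space is that of one of the functionals
`ξ ∘ R`, whose exponential moments are explicit. -/
theorem exp_opNorm_sq_le (R : EuclideanSpace ℝ (Fin k) →L[ℝ] X) {c : ℝ} (hc : 0 ≤ c) :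
    ENNReal.ofReal (Real.exp (c ^ 2 * ‖R‖ ^ 2 / 2)) ≤
      ∫⁻ s, ENNReal.ofReal (Real.exp (c * ‖R s‖)) ∂(stdGaussian (EuclideanSpace ℝ (Fin k))) := by
  obtain ⟨s₀, hs₀, hmax⟩ := (isCompact_closedBall (0 : EuclideanSpace ℝ (Fin k)) 1).exists_isMaxOn
    ⟨0, by simp⟩ (f := fun s => ‖R s‖) (by fun_prop)
  obtain ⟨ξ, hξ1, hξ2⟩ := exists_dual_vector'' ℝ (R s₀)
  have hξ2' : ξ (R s₀) = ‖R s₀‖ := by simpa using hξ2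
  have h1 : ‖R‖ ≤ ‖R s₀‖ := by
    refine R.opNorm_le_of_unit_norm (norm_nonneg _) fun s hs => ?_
    exact hmax (by simp [hs])
  have h2 : ‖R‖ ≤ ‖ξ.comp R‖ := by
    refine h1.trans ?_
    rw [← hξ2']
    have hs : ‖s₀‖ ≤ 1 := by simpa using hs₀
    calc ξ (R s₀) ≤ ‖(ξ.comp R) s₀‖ := le_abs_self _
      _ ≤ ‖ξ.comp R‖ * ‖s₀‖ := (ξ.comp R).le_opNorm _
      _ ≤ ‖ξ.comp R‖ * 1 := by gcongr
      _ = _ := mul_one _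
  have h3 := lintegral_exp_dual (c • ξ.comp R)
  rw [norm_smul, Real.norm_of_nonneg hc, mul_pow] at h3
  calc ENNReal.ofReal (Real.exp (c ^ 2 * ‖R‖ ^ 2 / 2))
      ≤ ENNReal.ofReal (Real.exp (c ^ 2 * ‖ξ.comp R‖ ^ 2 / 2)) := by gcongr
    _ = _ := h3.symm
    _ ≤ _ := by
      refine lintegral_mono fun s => ?_
      gcongr
      simp only [smul_apply, ContinuousLinearMap.comp_apply, smul_eq_mul]
      gcongr
      simpa using (le_abs_self _).trans (ξ.le_of_opNorm_le hξ1 (R s))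

theorem integrable_norm_comp_matOp (T : EuclideanSpace ℝ (Fin d) →L[ℝ] X) :
    Integrable (fun g : EuclideanSpace ℝ (Fin k × Fin d) => ‖T.comp (matOp g)‖)
      (stdGaussian _) :=
  integrable_norm_map
    ((ContinuousLinearMap.compL ℝ (EuclideanSpace ℝ (Fin k)) _ X T).comp matOp)

/-- The random vector of the values of the functional `η` at the columns of a matrix. -/
noncomputable def matRow (η : EuclideanSpace ℝ (Fin d) →L[ℝ] ℝ) :
    EuclideanSpace ℝ (Fin k × Fin d) →L[ℝ] EuclideanSpace ℝ (Fin k) :=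
  LinearMap.toContinuousLinearMap
    { toFun := fun g => WithLp.toLp 2 fun j => η (matCol j g)
      map_add' := fun _ _ => by ext; simp
      map_smul' := fun _ _ => by ext; simp }

theorem matRow_apply (η : EuclideanSpace ℝ (Fin d) →L[ℝ] ℝ)
    (g : EuclideanSpace ℝ (Fin k × Fin d)) (j : Fin k) : matRow η g j = η (matCol j g) := rfl

theorem le_integral_norm_matRow (η : EuclideanSpace ℝ (Fin d) →L[ℝ] ℝ) :
    √k * (gaussAbs * ‖η‖) ≤
      ∫ g : EuclideanSpace ℝ (Fin k × Fin d), ‖matRow η g‖ ∂(stdGaussian _) := by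
  rcases Nat.eq_zero_or_pos k with hk | hk
  · subst hk
    simpa using integral_nonneg fun _ => norm_nonneg _
  have hk' : (0 : ℝ) < k := by exact_mod_cast hk
  have hc : ∀ j : Fin k, ∫ g : EuclideanSpace ℝ (Fin k × Fin d), |η (matCol j g)| ∂(stdGaussian _)
      = gaussAbs * ‖η‖ := by
    intro j
    have := integral_matComb (d := d) (EuclideanSpace.single j (1 : ℝ)) (f := fun x => |η x|)
      (by fun_prop)
    simp only [PiLp.norm_single, norm_one, one_smul] at this
    rw [← integral_abs_dual, ← this]
    simp [matComb_apply]
  have hi : ∀ j : Fin k, Integrable (fun g : EuclideanSpace ℝ (Fin k × Fin d) =>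
      |η (matCol j g)|) (stdGaussian _) := fun j => integrable_norm_map (η.comp (matCol j))
  have h1 : ∑ j : Fin k, ∫ g : EuclideanSpace ℝ (Fin k × Fin d), |η (matCol j g)| ∂(stdGaussian _) ≤
      ∫ g : EuclideanSpace ℝ (Fin k × Fin d), √k * ‖matRow η g‖ ∂(stdGaussian _) := by
    rw [← integral_finsetSum _ fun j _ => hi j]
    refine integral_mono (integrable_finsetSum _ fun j _ => hi j)
      ((integrable_norm_map (matRow η)).const_mul _) fun g => ?_
    have := Real.sum_mul_le_sqrt_mul_sqrt Finset.univ (fun _ : Fin k => (1 : ℝ))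
      (fun j => |η (matCol j g)|)
    simpa [EuclideanSpace.norm_eq, matRow_apply] using this
  rw [integral_const_mul] at h1
  simp only [hc, Finset.sum_const, Finset.card_univ, Fintype.card_fin, nsmul_eq_mul] at h1
  have h2 : √(k : ℝ) * √k = k := Real.mul_self_sqrt hk'.le
  have h3 : 0 < √(k : ℝ) := Real.sqrt_pos.mpr hk'
  nth_rewrite 1 [← h2] at h1
  rw [mul_assoc] at h1
  exact le_of_mul_le_mul_left h1 h3

/-- The weak `ℓ₂` norm of the columns of `T ∘ g` is at most the operator norm. -/
theorem sum_sq_matCol_le (T : EuclideanSpace ℝ (Fin d) →L[ℝ] X)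
    (g : EuclideanSpace ℝ (Fin k × Fin d)) (ξ : X →L[ℝ] ℝ) :
    ∑ j, ξ (T (matCol j g)) ^ 2 ≤ ‖T.comp (matOp g)‖ ^ 2 * ‖ξ‖ ^ 2 := by
  set s := matRow (ξ.comp T) g with hs
  have h1 : ∑ j, ξ (T (matCol j g)) ^ 2 = ‖s‖ ^ 2 := by
    rw [EuclideanSpace.real_norm_sq_eq]
    rfl
  have h2 : ‖s‖ ^ 2 = ξ (T (matComb s g)) := by
    rw [← h1, matComb_apply]
    simp only [map_sum, map_smul, smul_eq_mul, sq]
    rfl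
  have h3 : ‖s‖ * ‖s‖ ≤ (‖T.comp (matOp g)‖ * ‖ξ‖) * ‖s‖ := by
    rw [← sq, h2, ← matOp_apply]
    calc _ ≤ ‖ξ (T (matOp g s))‖ := le_abs_self _
      _ ≤ ‖ξ‖ * (‖T.comp (matOp g)‖ * ‖s‖) := by
        refine (ξ.le_opNorm _).trans ?_
        gcongr
        exact (T.comp (matOp g)).le_opNorm s
      _ = _ := by ring
  have h4 : ‖s‖ ≤ ‖T.comp (matOp g)‖ * ‖ξ‖ := by
    rcases (norm_nonneg s).eq_or_lt with h0 | h0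
    · rw [← h0]; positivity
    · exact le_of_mul_le_mul_right h3 h0
  rw [h1, ← mul_pow]
  gcongr

variable [FiniteDimensional ℝ X]

/-- Exponential moments of the square of the norm of a Gaussian operator `T ∘ g`. The square is
linearised by a further Gaussian vector `s`, and conditionally on `s` the vector `T (g s)` is a
multiple of `T x`, `x` standard Gaussian. -/
theorem lintegral_exp_matOp_le (T : EuclideanSpace ℝ (Fin d) →L[ℝ] X) (hT : ‖T‖ ≤ 1) {e : ℝ}
    (he : e = ∫ x, ‖T x‖ ∂(stdGaussian (EuclideanSpace ℝ (Fin d)))) :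
    ∫⁻ g : EuclideanSpace ℝ (Fin k × Fin d), ENNReal.ofReal (Real.exp (‖T.comp (matOp g)‖ ^ 2 / 32))
      ∂(stdGaussian _) ≤ ENNReal.ofReal (Real.exp (k / 2 + 9 * e ^ 2 / 4)) := by
  have he0 : 0 ≤ e := he ▸ integral_nonneg fun _ => norm_nonneg _
  have hjm : Continuous fun p : EuclideanSpace ℝ (Fin k × Fin d) × EuclideanSpace ℝ (Fin k) =>
      T (matComb p.2 p.1) := by
    simp_rw [matComb_apply]
    fun_prop
  calc _ ≤ ∫⁻ g : EuclideanSpace ℝ (Fin k × Fin d), ∫⁻ s : EuclideanSpace ℝ (Fin k),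
        ENNReal.ofReal (Real.exp (1 / 4 * ‖T (matComb s g)‖)) ∂(stdGaussian _)
        ∂(stdGaussian _) := by
        refine lintegral_mono fun g => ?_
        have := exp_opNorm_sq_le (T.comp (matOp g)) (c := 1 / 4) (by norm_num)
        simp only [ContinuousLinearMap.comp_apply, matOp_apply] at this
        refine le_trans (le_of_eq ?_) this
        congr 2; ring
    _ = ∫⁻ s : EuclideanSpace ℝ (Fin k), ∫⁻ g : EuclideanSpace ℝ (Fin k × Fin d),
        ENNReal.ofReal (Real.exp (1 / 4 * ‖T (matComb s g)‖)) ∂(stdGaussian _)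
        ∂(stdGaussian _) := by
        apply lintegral_lintegral_swap
        apply Measurable.aemeasurable
        apply Measurable.ennreal_ofReal
        apply Continuous.measurable
        exact Real.continuous_exp.comp (hjm.norm.const_mul _)
    _ ≤ ∫⁻ s : EuclideanSpace ℝ (Fin k), ENNReal.ofReal (Real.exp (9 * e ^ 2 / 4)) *
        ENNReal.ofReal (Real.exp (‖s‖ ^ 2 / 4)) ∂(stdGaussian _) := by
        refine lintegral_mono fun s => ?_
        have h1 := lintegral_matComb (d := d) s
          (f := fun x => ENNReal.ofReal (Real.exp (1 / 4 * ‖T x‖)))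
          (by
            apply Measurable.ennreal_ofReal
            apply Continuous.measurable
            fun_prop)
        have h2 := integral_exp_norm_le T hT (1 / 4 * ‖s‖) (by positivity)
        simp only at h1 ⊢
        rw [h1]
        simp only [map_smul, norm_smul, norm_norm, ← mul_assoc]
        refine h2.trans ?_
        rw [← he, ← ENNReal.ofReal_mul (by positivity), ← Real.exp_add]
        gcongr
        nlinarith [sq_nonneg (‖s‖ / 4 - 3 / 2 * e)]
    _ = ENNReal.ofReal (Real.exp (9 * e ^ 2 / 4)) * ENNReal.ofReal (√2) ^ k := by
        rw [lintegral_const_mul _ (by fun_prop), lintegral_exp_norm_sq_div_four]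
    _ ≤ _ := by
        rw [← ENNReal.ofReal_pow (by positivity), ← ENNReal.ofReal_mul (by positivity),
          add_comm, Real.exp_add]
        gcongr
        have : √2 ≤ Real.exp (1 / 2) := by
          have h1 : √2 ≤ 3 / 2 := by rw [Real.sqrt_le_left (by norm_num)]; norm_num
          have h2 := Real.add_one_le_exp (1 / 2 : ℝ)
          linarith
        calc √2 ^ k ≤ Real.exp (1 / 2) ^ k := by gcongr
          _ = _ := by rw [← Real.exp_nat_mul]; congr 1; ring

/-- Chevet's inequality `E ‖T ∘ g‖ ≲ E ‖T x‖`, for `k` at most of the order of the squared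
Gaussian mean of `T` (the Dvoretzky dimension). -/
theorem integral_norm_comp_matOp_le (T : EuclideanSpace ℝ (Fin d) →L[ℝ] X) (hT : ‖T‖ ≤ 1) {e : ℝ}
    (he : e = ∫ x, ‖T x‖ ∂(stdGaussian (EuclideanSpace ℝ (Fin d)))) (he1 : 1 ≤ e)
    (hk : (k : ℝ) ≤ 2 * e ^ 2) :
    ∫ g : EuclideanSpace ℝ (Fin k × Fin d), ‖T.comp (matOp g)‖ ∂(stdGaussian _) ≤ 53 * e := by
  set D : ℝ := k / 2 + 9 * e ^ 2 / 4 with hD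
  set μ := stdGaussian (EuclideanSpace ℝ (Fin k × Fin d))
  let M : EuclideanSpace ℝ (Fin k × Fin d) → ℝ := fun g => ‖T.comp (matOp g)‖
  have hMi : Integrable M μ := integrable_norm_comp_matOp T
  have hMc : Continuous M := by
    simp only [M]
    fun_prop
  have hle : ∫⁻ g, ENNReal.ofReal (Real.exp (M g ^ 2 / 32)) ∂μ ≤ ENNReal.ofReal (Real.exp D) :=
    lintegral_exp_matOp_le T hT he
  have hi : Integrable (fun g => Real.exp (M g ^ 2 / 32)) μ :=
    (lintegral_ofReal_ne_top_iff_integrable (by fun_prop)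
      (ae_of_all _ fun g => (Real.exp_pos _).le)).mp (hle.trans_lt ENNReal.ofReal_lt_top).ne
  have hE : ∫ g, Real.exp (M g ^ 2 / 32) ∂μ ≤ Real.exp D := by
    rw [← ofReal_integral_eq_lintegral_ofReal hi (ae_of_all _ fun g => (Real.exp_pos _).le)] at hle
    exact (ENNReal.ofReal_le_ofReal_iff (Real.exp_pos _).le).mp hle
  -- `M ≤ (M² / e + e) / 2`, and the tangent line of `exp` at `D` bounds `M²`
  have hpt : ∀ g, M g ≤ 16 / e * (D - 1 + Real.exp (-D) * Real.exp (M g ^ 2 / 32)) + e / 2 := by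
    intro g
    have h1 := Real.add_one_le_exp (M g ^ 2 / 32 - D)
    rw [sub_eq_add_neg, Real.exp_add, mul_comm] at h1
    have h2 : M g ^ 2 / 32 ≤ D - 1 + Real.exp (-D) * Real.exp (M g ^ 2 / 32) := by linarith
    have h3 : 16 / e * (M g ^ 2 / 32) + e / 2 - M g = (M g - e) ^ 2 / (2 * e) := by
      field_simp; ring
    have h4 : 0 ≤ (M g - e) ^ 2 / (2 * e) := by positivity
    have h5 := mul_le_mul_of_nonneg_left h2 (show 0 ≤ 16 / e by positivity)
    linarith
  have hint : ∫ g, M g ∂μ ≤ 16 / e * (D - 1 + Real.exp (-D) * ∫ g, Real.exp (M g ^ 2 / 32) ∂μ)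
      + e / 2 := by
    have h1 : Integrable (fun g => D - 1 + Real.exp (-D) * Real.exp (M g ^ 2 / 32)) μ :=
      (integrable_const _).add (hi.const_mul _)
    refine (integral_mono hMi ((h1.const_mul (16 / e)).add (integrable_const (e / 2))) hpt).trans
      (le_of_eq ?_)
    simp only [Pi.add_apply]
    rw [integral_add (h1.const_mul _) (integrable_const _), integral_const_mul,
      integral_add (integrable_const _) (hi.const_mul _), integral_const_mul]
    simp
  have h6 : Real.exp (-D) * ∫ g, Real.exp (M g ^ 2 / 32) ∂μ ≤ 1 := by
    calc _ ≤ Real.exp (-D) * Real.exp D := by gcongr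
      _ = 1 := by rw [← Real.exp_add]; simp
  have h7 : 16 / e * (D - 1 + Real.exp (-D) * ∫ g, Real.exp (M g ^ 2 / 32) ∂μ) ≤
      16 / e * (13 / 4 * e ^ 2) := by
    gcongr
    linarith
  have h8 : 16 / e * (13 / 4 * e ^ 2) = 52 * e := by field_simp; ring
  change ∫ g, M g ∂μ ≤ _
  linarith

/-- The Grothendieck inequality applied to the columns of two matrices and to the operator
`∑ ξ_i ⊗ z_i` with suitable norming functionals `z_i`. -/
theorem GTBound.sum_norm_matComb_le {C : ℝ} (hC : 0 ≤ C) (h : GTBound X C)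
    (T : EuclideanSpace ℝ (Fin d) →L[ℝ] X) {m : ℕ} (ξ : Fin m → (X →L[ℝ] ℝ)) {w : ℝ} (hw : 0 ≤ w)
    (hξ : ∀ x, ∑ i, |ξ i x| ≤ w * ‖x‖) (g g' : EuclideanSpace ℝ (Fin k × Fin d)) :
    ∑ i, ‖T (matComb (matRow ((ξ i).comp T) g) g')‖ ≤
      C * w * ‖T.comp (matOp g)‖ * ‖T.comp (matOp g')‖ := by
  choose z hz1 hz2 using fun i =>
    exists_dual_vector'' ℝ (T (matComb (matRow ((ξ i).comp T) g) g'))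
  let A : X →L[ℝ] (X →L[ℝ] ℝ) := ∑ i, (ξ i).smulRight (z i)
  have hA : ‖A‖ ≤ w := by
    refine A.opNorm_le_bound hw fun x => ?_
    simp only [A, sum_apply, ContinuousLinearMap.smulRight_apply]
    refine (norm_sum_le _ _).trans (le_trans ?_ (hξ x))
    refine Finset.sum_le_sum fun i _ => ?_
    rw [norm_smul, Real.norm_eq_abs]
    exact mul_le_of_le_one_right (abs_nonneg _) (hz1 i)
  have h1 := h.sum_le hC A (fun j => T (matCol j g)) (fun j => T (matCol j g'))
    (norm_nonneg (T.comp (matOp g))) (norm_nonneg (T.comp (matOp g')))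
    (sum_sq_matCol_le T g) (sum_sq_matCol_le T g')
  have h2 : ∑ i, ‖T (matComb (matRow ((ξ i).comp T) g) g')‖ =
      ∑ j, A (T (matCol j g)) (T (matCol j g')) := by
    simp only [A, sum_apply, ContinuousLinearMap.smulRight_apply, smul_apply]
    rw [Finset.sum_comm]
    refine Finset.sum_congr rfl fun i _ => ?_
    have := hz2 i
    simp only [RCLike.ofReal_real_eq_id, id] at this
    rw [← this]
    simp only [matComb_apply, map_sum, map_smul, matRow_apply, ContinuousLinearMap.comp_apply]
  rw [h2]
  refine h1.trans ?_
  gcongr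

/-- The heart of the argument: an operator `T` from a Euclidean space gives the `1`-summing operator
`ξ ↦ ξ ∘ T`. Matrices with `k ≈ (E ‖T x‖)²` columns balance the two sides of the Grothendieck
inequality. -/
theorem GTBound.sum_norm_comp_le {C : ℝ} (hC : 0 ≤ C) (h : GTBound X C)
    (T : EuclideanSpace ℝ (Fin d) →L[ℝ] X) (hT : ‖T‖ ≤ 1) {m : ℕ} (ξ : Fin m → (X →L[ℝ] ℝ))
    {w : ℝ} (hw : 0 ≤ w) (hξ : ∀ x, ∑ i, |ξ i x| ≤ w * ‖x‖) :
    ∑ i, ‖(ξ i).comp T‖ ≤ (2809 * C + 1) / gaussAbs * w := by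
  obtain ⟨e, he⟩ : ∃ e, e = ∫ x, ‖T x‖ ∂(stdGaussian (EuclideanSpace ℝ (Fin d))) := ⟨_, rfl⟩
  have ha := gaussAbs_pos
  set S := ∑ i, ‖(ξ i).comp T‖ with hS
  have hS0 : 0 ≤ S := Finset.sum_nonneg fun _ _ => norm_nonneg _
  rw [div_mul_eq_mul_div, le_div_iff₀ ha]
  rcases le_total e 1 with he1 | he1
  · have h1 : S * gaussAbs ≤ w * e := by
      have hi : ∀ i, Integrable (fun x => |ξ i (T x)|) (stdGaussian (EuclideanSpace ℝ (Fin d))) :=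
        fun i => integrable_norm_map ((ξ i).comp T)
      calc S * gaussAbs = ∑ i, ∫ x, |ξ i (T x)| ∂(stdGaussian (EuclideanSpace ℝ (Fin d))) := by
            rw [hS, Finset.sum_mul]
            refine Finset.sum_congr rfl fun i _ => ?_
            rw [mul_comm, ← integral_abs_dual]
            rfl
        _ = ∫ x, ∑ i, |ξ i (T x)| ∂(stdGaussian (EuclideanSpace ℝ (Fin d))) :=
            (integral_finsetSum _ fun i _ => hi i).symm
        _ ≤ ∫ x, w * ‖T x‖ ∂(stdGaussian (EuclideanSpace ℝ (Fin d))) :=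
            integral_mono (integrable_finsetSum _ fun i _ => hi i)
              ((integrable_norm_map T).const_mul _) fun x => hξ (T x)
        _ = w * e := by rw [integral_const_mul, he]
    have h2 : w * e ≤ w * 1 := by gcongr
    nlinarith [mul_nonneg hC hw]
  set k := ⌈e ^ 2⌉₊ with hk
  have hk1 : e ^ 2 ≤ k := Nat.le_ceil _
  have hk2 : (k : ℝ) ≤ 2 * e ^ 2 := by
    have := (Nat.ceil_lt_add_one (show 0 ≤ e ^ 2 by positivity)).le
    nlinarith
  have hek : e ≤ √k := Real.le_sqrt_of_sq_le hk1
  have he0 : 0 < e := by linarith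
  let M : EuclideanSpace ℝ (Fin k × Fin d) → ℝ := fun g => ‖T.comp (matOp g)‖
  have hM : ∫ g, M g ∂(stdGaussian _) ≤ 53 * e := integral_norm_comp_matOp_le T hT he he1 hk2
  have hMi : Integrable M (stdGaussian _) := integrable_norm_comp_matOp T
  have hM0 : 0 ≤ ∫ g, M g ∂(stdGaussian _) := integral_nonneg fun _ => norm_nonneg _
  -- integration over the second matrix
  have h1 : ∀ g : EuclideanSpace ℝ (Fin k × Fin d),
      ∑ i, ‖matRow ((ξ i).comp T) g‖ * e ≤ C * w * M g * (53 * e) := by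
    intro g
    have hs : ∀ s : EuclideanSpace ℝ (Fin k),
        ∫ g' : EuclideanSpace ℝ (Fin k × Fin d), ‖T (matComb s g')‖ ∂(stdGaussian _) = ‖s‖ * e := by
      intro s
      rw [integral_matComb s (f := fun x => ‖T x‖) T.continuous.norm.measurable]
      simp only [map_smul, norm_smul, norm_norm]
      rw [integral_const_mul, he]
    have hi : ∀ s : EuclideanSpace ℝ (Fin k), Integrable
        (fun g' : EuclideanSpace ℝ (Fin k × Fin d) => ‖T (matComb s g')‖) (stdGaussian _) :=
      fun s => integrable_norm_map (T.comp (matComb s))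
    simp_rw [← hs]
    rw [← integral_finsetSum _ fun i _ => hi _]
    refine (integral_mono (integrable_finsetSum _ fun i _ => hi _) (hMi.const_mul (C * w * M g))
      fun g' => h.sum_norm_matComb_le hC T ξ hw hξ g g').trans ?_
    rw [integral_const_mul]
    have : 0 ≤ M g := norm_nonneg _
    gcongr
  -- integration over the first matrix
  have h2 : ∑ i, (√k * (gaussAbs * ‖(ξ i).comp T‖)) * e ≤ C * w * (53 * e) * (53 * e) := by
    calc _ ≤ ∑ i, (∫ g : EuclideanSpace ℝ (Fin k × Fin d), ‖matRow ((ξ i).comp T) g‖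
          ∂(stdGaussian _)) * e := by
          gcongr
          exact le_integral_norm_matRow _
      _ = ∫ g : EuclideanSpace ℝ (Fin k × Fin d), ∑ i, ‖matRow ((ξ i).comp T) g‖ * e
          ∂(stdGaussian _) := by
          rw [integral_finsetSum _ fun i _ => (integrable_norm_map _).mul_const _]
          simp_rw [integral_mul_const]
      _ ≤ ∫ g, C * w * M g * (53 * e) ∂(stdGaussian _) :=
          integral_mono (integrable_finsetSum _ fun i _ => (integrable_norm_map _).mul_const _)
            ((hMi.const_mul _).mul_const _) h1
      _ = C * w * (∫ g, M g ∂(stdGaussian _)) * (53 * e) := by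
          rw [integral_mul_const, integral_const_mul]
      _ ≤ _ := by gcongr
  rw [← Finset.sum_mul, ← Finset.mul_sum, ← Finset.mul_sum, ← hS] at h2
  have h3 : e * (gaussAbs * S) * e ≤ √k * (gaussAbs * S) * e := by gcongr
  have h4 : (S * gaussAbs) * e ^ 2 ≤ (2809 * C * w) * e ^ 2 := by nlinarith
  have h5 := le_of_mul_le_mul_right h4 (by positivity)
  linarith

/-- Condition (2), first half: operators from the dual into Hilbert spaces are `1`-summing. Onto its
finite dimensional range such an operator has the form `ξ ↦ ξ ∘ T`. -/
theorem GTBound.psum_one {C : ℝ} (hC : 0 ≤ C) (h : GTBound X C) {H : Type*}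
    [NormedAddCommGroup H] [InnerProductSpace ℝ H] (B : (X →L[ℝ] ℝ) →L[ℝ] H) :
    PSummingBound 1 ((2809 * C + 1) / gaussAbs * ‖B‖) B := by
  have hK : 0 ≤ (2809 * C + 1) / gaussAbs := div_nonneg (by positivity) gaussAbs_pos.le
  rw [psum_one_iff (by positivity)]
  intro m ξ w hw hξ
  rcases (norm_nonneg B).eq_or_lt with hB | hB
  · rw [(norm_eq_zero (a := B)).mp hB.symm]
    simp only [zero_apply, norm_zero, Finset.sum_const_zero]
    positivity
  let S := LinearMap.range (B : (X →L[ℝ] ℝ) →ₗ[ℝ] H)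
  let b := stdOrthonormalBasis ℝ S
  choose t ht using fun l => exists_eq_eval ((innerSL ℝ (b l : H)).comp B)
  let T : EuclideanSpace ℝ (Fin (Module.finrank ℝ S)) →L[ℝ] X :=
    ∑ l, (EuclideanSpace.proj l : EuclideanSpace ℝ (Fin (Module.finrank ℝ S)) →L[ℝ] ℝ).smulRight
      (‖B‖⁻¹ • t l)
  have hTa : ∀ (η : X →L[ℝ] ℝ) s, ‖B‖ * η (T s) = inner ℝ ((b.repr.symm s : S) : H) (B η) := by
    intro η s
    have h1 : ∀ l, η (t l) = inner ℝ (b l : H) (B η) := fun l => (ht l η).symm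
    rw [← b.sum_repr_symm s]
    simp only [T, sum_apply, ContinuousLinearMap.smulRight_apply, map_sum, map_smul, smul_eq_mul,
      h1, Finset.mul_sum, Submodule.coe_sum, Submodule.coe_smul, sum_inner, inner_smul_left]
    refine Finset.sum_congr rfl fun l _ => ?_
    simp
    field_simp
  have hT : ‖T‖ ≤ 1 := by
    refine T.opNorm_le_bound zero_le_one fun s => ?_
    obtain ⟨η, hη1, hη2⟩ := exists_dual_vector'' ℝ (T s)
    have hη2' : η (T s) = ‖T s‖ := by simpa using hη2
    have h1 := hTa η s
    rw [hη2'] at h1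
    have h2 : inner ℝ ((b.repr.symm s : S) : H) (B η) ≤ ‖s‖ * (‖B‖ * 1) := by
      refine (real_inner_le_norm _ _).trans ?_
      have h3 : ‖((b.repr.symm s : S) : H)‖ = ‖s‖ := b.repr.symm.norm_map s
      rw [h3]
      gcongr
      refine (B.le_opNorm η).trans ?_
      gcongr
    rw [one_mul]
    refine le_of_mul_le_mul_left (h1.le.trans (h2.trans (le_of_eq ?_))) hB
    ring
  have hBT : ∀ η, ‖B η‖ ≤ ‖B‖ * ‖η.comp T‖ := by
    intro η
    let y : S := ⟨B η, LinearMap.mem_range_self _ η⟩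
    have h1 := hTa η (b.repr y)
    rw [LinearIsometryEquiv.symm_apply_apply] at h1
    have h2 : inner ℝ (y : H) (B η) = ‖B η‖ * ‖B η‖ := real_inner_self_eq_norm_mul_norm _
    have h3 : ‖b.repr y‖ = ‖B η‖ := by rw [LinearIsometryEquiv.norm_map]; rfl
    have h4 : η (T (b.repr y)) ≤ ‖η.comp T‖ * ‖B η‖ := by
      rw [← h3]
      exact (le_abs_self _).trans ((η.comp T).le_opNorm _)
    rcases (norm_nonneg (B η)).eq_or_lt with h0 | h0
    · rw [← h0]; positivity
    · refine le_of_mul_le_mul_right ?_ h0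
      rw [← h2, ← h1, mul_assoc]
      gcongr
  have hw' : ∀ x, ∑ i, |ξ i x| ≤ w * ‖x‖ := by
    intro x
    refine (hξ (ContinuousLinearMap.apply ℝ ℝ x)).trans ?_
    gcongr
    exact ContinuousLinearMap.opNorm_le_bound _ (norm_nonneg _) fun η => by
      simpa [mul_comm] using η.le_opNorm x
  calc ∑ i, ‖B (ξ i)‖ ≤ ∑ i, ‖B‖ * ‖(ξ i).comp T‖ := Finset.sum_le_sum fun i _ => hBT _
    _ = ‖B‖ * ∑ i, ‖(ξ i).comp T‖ := by rw [Finset.mul_sum]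
    _ ≤ ‖B‖ * ((2809 * C + 1) / gaussAbs * w) := by
      gcongr
      exact h.sum_norm_comp_le hC T hT ξ hw hw'
    _ = _ := by ring

end GaussianSummation

/-! ### The equivalences -/

section Final

variable (E : ℕ → Type*) [∀ n, NormedAddCommGroup (E n)] [∀ n, NormedSpace ℝ (E n)]

theorem Stmt7Two.three (h : Stmt7Two E) : Stmt7Three E := by
  obtain ⟨K₁, hK₁, K₂, hK₂, h⟩ := h
  exact ⟨K₁, hK₁, K₂, hK₂, fun n hn =>
    ⟨fun ι B => psum_two_of_one (by positivity) ((h n hn).1 ι B), (h n hn).2⟩⟩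

variable [∀ n, FiniteDimensional ℝ (E n)]

theorem Stmt7One.two (h : Stmt7One E) : Stmt7Two E := by
  obtain ⟨C, hC, h⟩ := h
  refine ⟨(2809 * C + 1) / gaussAbs, div_pos (by positivity) gaussAbs_pos, C, hC,
    fun n hn => ⟨fun ι B => GTBound.psum_one hC.le (h n hn) B, fun A ε hε => ?_⟩⟩
  obtain ⟨φ, ψ, hA, hφ, hψ, -, -⟩ := GTBound.exists_factorization hC.le (h n hn) A
  refine ⟨ℕ, φ, ψ, hA, ?_⟩
  calc ‖ψ‖ * ‖φ‖ ≤ C * ‖A‖ * 1 := mul_le_mul hψ hφ (norm_nonneg _) (by positivity)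
    _ ≤ C * ‖A‖ + ε := by linarith

theorem Stmt7Three.one (h : Stmt7Three E) : Stmt7One E := by
  obtain ⟨K₁, hK₁, K₂, hK₂, h⟩ := h
  exact ⟨K₁ ^ 2 * K₂, by positivity, fun n hn =>
    gtBound_of_summing hK₁.le (fun B => (h n hn).1 ℕ B) (h n hn).2⟩

theorem Stmt7One.four (h : Stmt7One E) : Stmt7Four E := by
  obtain ⟨C, hC, h⟩ := h
  refine ⟨C, hC, fun n hn A ε hε => ?_⟩
  obtain ⟨φ, ψ, hA, -, -, hφ, hψ⟩ := GTBound.exists_factorization hC.le (h n hn) A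
  exact ⟨φ, ψ, 1, C * ‖A‖, zero_le_one, by positivity, hA, hφ, hψ, by linarith⟩

end Final

/-- Proposition 4.1: (1) ⇔ (2) ⇔ (3), and (1) ⇒ (4). -/
theorem statement7
    (E : ℕ → Type*) [∀ n, NormedAddCommGroup (E n)] [∀ n, NormedSpace ℝ (E n)]
    [∀ n, FiniteDimensional ℝ (E n)]
    (hdim : ∀ n, 1 ≤ n → Module.finrank ℝ (E n) = n) :
    (Stmt7One E ↔ Stmt7Two E) ∧ (Stmt7Two E ↔ Stmt7Three E) ∧
      (Stmt7One E → Stmt7Four E) :=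
  ⟨⟨fun h => h.two, fun h => h.three.one⟩, ⟨fun h => h.three, fun h => h.one.two⟩,
    fun h => h.four⟩
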